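/- arXiv:1303.7471 — 9 statements merged into one kernel-verified Lean document; each statement's English description precedes it below -/
import Mathlib

section
/- Let X be a set, J a finite index set, and for each i ∈ J let U_i ⊆ X be a subset and x_i : X → ℝ a function with x_i > 0 on U_i. Suppose M ≥ 1 is such that x_j/M ≤ x_i ≤ M x_j on U_i ∩ U_j for all i, j ∈ J, and let δ be a real number with 0 < δ ≤ min(1/4, M^{-2}). Suppose χ_0 and (χ_j)_{j∈J} are functions X → [0,1] with χ_0 + ∑_{j∈J} χ_j = 1 on X, with χ_j = 0 outside U_j for each j ∈ J, and with χ_0(p) = 0 at every point p for which there exists j ∈ J with p ∈ U_j and x_j(p) ≤ 1/4. Then there exists a function ρ : X → ℝ with 0 < ρ ≤ 1 on X such that for every i ∈ J: (a) x_i ≤ ρ ≤ (M²/δ) x_i at every point of U_i where x_i ≤ δ, and (b) ρ = 1 at every point of U_i where x_i ≥ δ. -/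
/-!
At every point the weight is a convex combination of `1` and of the values `min 1 (M x_j / δ)` in
the charts `j` containing that point, so it lies in every convex set that contains the values
occurring with nonzero coefficient. At a point of chart `i`, comparability puts those values in
`{1}` where `δ ≤ x_i`, and in `[x_i, (M² / δ) x_i]` where `x_i ≤ δ`; in the latter case the
coefficient of the constant `1`, which need not lie in the interval, vanishes.
-/

theorem add_finsum_smul_mem_of_convex {𝕜 E ι : Type*} [Field 𝕜] [LinearOrder 𝕜]
    [IsStrictOrderedRing 𝕜] [AddCommGroup E] [Module 𝕜 E] {s : Set E} (hs : Convex 𝕜 s)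
    {c : 𝕜} {w : ι → 𝕜} {a : E} {v : ι → E} (hc : 0 ≤ c) (hw : ∀ j, 0 ≤ w j)
    (hfin : w.HasFiniteSupport) (hsum : c + ∑ᶠ j, w j = 1) (ha : c ≠ 0 → a ∈ s)
    (hv : ∀ j, w j ≠ 0 → v j ∈ s) : c • a + ∑ᶠ j, w j • v j ∈ s := by
  let w' : Option ι → 𝕜 := fun k => k.elim c w
  let v' : Option ι → E := fun k => k.elim a v
  have hsum' : ∑ᶠ k, w' k = 1 := (finsum_option (f := w') hfin).trans hsum
  have hfin' : (fun j => w j • v j).HasFiniteSupport :=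
    hfin.subset (Function.support_smul_subset_left w v)
  have hmem : ∑ᶠ k, w' k • v' k ∈ s :=
    hs.finsum_mem (Option.rec hc hw) hsum' (Option.rec ha hv)
  rwa [finsum_option (f := fun k => w' k • v' k) hfin'] at hmem

section TruncatedScale

variable {𝕜 : Type*} [Field 𝕜] [LinearOrder 𝕜]

/-- The local model of the weight in a chart with boundary defining function `t`: the rescaling
`(M / δ) t`, cut off at `1`. The factor `M` absorbs the passage to a comparable boundary defining
function. -/
def truncatedScale (M δ t : 𝕜) : 𝕜 :=
  min 1 (M * t / δ)

variable {M δ s t : 𝕜}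

theorem truncatedScale_le_one : truncatedScale M δ t ≤ 1 :=
  min_le_left _ _

variable [IsStrictOrderedRing 𝕜]

theorem truncatedScale_pos (hδ : 0 < δ) (h : 0 < M * t) : 0 < truncatedScale M δ t :=
  lt_min one_pos (div_pos h hδ)

theorem truncatedScale_eq_one (hδ : 0 < δ) (h : δ ≤ M * t) : truncatedScale M δ t = 1 :=
  min_eq_left ((one_le_div hδ).2 h)

theorem le_truncatedScale (hδ : 0 < δ) (hδ1 : δ ≤ 1) (hs : 0 ≤ s) (hs1 : s ≤ 1)
    (hst : s ≤ M * t) : s ≤ truncatedScale M δ t :=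
  le_min hs1 (hst.trans (le_div_self (hs.trans hst) hδ hδ1))

theorem truncatedScale_le (hδ : 0 ≤ δ) (hM : 0 ≤ M) (hts : t ≤ M * s) :
    truncatedScale M δ t ≤ M ^ 2 / δ * s :=
  calc truncatedScale M δ t ≤ M * t / δ := min_le_right _ _
    _ ≤ M * (M * s) / δ := by gcongr
    _ = M ^ 2 / δ * s := by ring

end TruncatedScale

section PartitionWeight

variable {𝕜 : Type*} [Field 𝕜] [LinearOrder 𝕜] [IsStrictOrderedRing 𝕜]

/-- The weight function glued from the truncated local scales `x j` by the partition of unity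
`χ₀ + ∑ χ j = 1`, with the constant `1` as local model in the interior region carrying `χ₀`.
The index type is arbitrary; at points where infinitely many terms are nonzero the sum is `0`. -/
noncomputable def partitionWeight {X J : Type*} (χ₀ : X → 𝕜) (χ x : J → X → 𝕜) (M δ : 𝕜) (p : X) :
    𝕜 :=
  χ₀ p + ∑ᶠ j, χ j p * truncatedScale M δ (x j p)

variable {X J : Type*} {U : J → Set X} {x χ : J → X → 𝕜} {χ₀ : X → 𝕜} {M δ : 𝕜}

theorem partitionWeight_mem_of_convex {s : Set 𝕜} (hs : Convex 𝕜 s) {p : X} (hχ₀ : 0 ≤ χ₀ p)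
    (hχ : ∀ j, 0 ≤ χ j p) (hfin : (fun j => χ j p).HasFiniteSupport)
    (hsum : χ₀ p + ∑ᶠ j, χ j p = 1) (hsupp : ∀ j, p ∉ U j → χ j p = 0)
    (hone : χ₀ p ≠ 0 → 1 ∈ s) (hscale : ∀ j, p ∈ U j → truncatedScale M δ (x j p) ∈ s) :
    partitionWeight χ₀ χ x M δ p ∈ s := by
  have hactive (j : J) (hj : χ j p ≠ 0) : truncatedScale M δ (x j p) ∈ s :=
    hscale j (not_imp_comm.1 (hsupp j) hj)
  simpa only [smul_eq_mul, mul_one, partitionWeight] using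
    add_finsum_smul_mem_of_convex hs hχ₀ hχ hfin hsum hone hactive

theorem stmt_0_general (hpos : ∀ i, ∀ p ∈ U i, 0 < x i p)
    (hcomp : ∀ i j, ∀ p ∈ U i ∩ U j, x i p ≤ M * x j p) (hδ : 0 < δ) (hδ1 : δ ≤ 1)
    (hχ₀ : ∀ p, 0 ≤ χ₀ p) (hχ : ∀ j p, 0 ≤ χ j p)
    (hfin : ∀ p, (fun j => χ j p).HasFiniteSupport) (hsum : ∀ p, χ₀ p + ∑ᶠ j, χ j p = 1)
    (hsupp : ∀ j p, p ∉ U j → χ j p = 0) (hχ₀_zero : ∀ i, ∀ p ∈ U i, x i p ≤ δ → χ₀ p = 0) :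
    (∀ p, 0 < partitionWeight χ₀ χ x M δ p ∧ partitionWeight χ₀ χ x M δ p ≤ 1) ∧
      ∀ i, ∀ p ∈ U i,
        (x i p ≤ δ → x i p ≤ partitionWeight χ₀ χ x M δ p ∧
          partitionWeight χ₀ χ x M δ p ≤ M ^ 2 / δ * x i p) ∧
        (δ ≤ x i p → partitionWeight χ₀ χ x M δ p = 1) := by
  have hmem {s : Set 𝕜} (hs : Convex 𝕜 s) (p : X) :=
    partitionWeight_mem_of_convex (x := x) (M := M) (δ := δ) hs (hχ₀ p) (hχ · p) (hfin p) (hsum p)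
      (hsupp · p)
  have hMx (j : J) (p : X) (hj : p ∈ U j) : 0 < M * x j p :=
    (hpos j p hj).trans_le (hcomp j j p ⟨hj, hj⟩)
  refine ⟨fun p => ?_, fun i p hi => ⟨fun hx => ?_, fun hx => ?_⟩⟩
  · exact hmem (convex_Ioc 0 1) p (fun _ => ⟨one_pos, le_rfl⟩) fun j hj =>
      ⟨truncatedScale_pos hδ (hMx j p hj), truncatedScale_le_one⟩
  · have hM : 0 ≤ M := (pos_of_mul_pos_left (hMx i p hi) (hpos i p hi).le).le
    exact hmem (convex_Icc (x i p) (M ^ 2 / δ * x i p)) p (absurd (hχ₀_zero i p hi hx)) fun j hj =>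
      ⟨le_truncatedScale hδ hδ1 (hpos i p hi).le (hx.trans hδ1) (hcomp i j p ⟨hi, hj⟩),
        truncatedScale_le hδ.le hM (hcomp j i p ⟨hj, hi⟩)⟩
  · exact hmem (convex_singleton 1) p (fun _ => rfl) fun j hj =>
      truncatedScale_eq_one hδ (hx.trans (hcomp i j p ⟨hi, hj⟩))

end PartitionWeight

theorem stmt_0 {X : Type*} {J : Type*} [Fintype J]
    (U : J → Set X) (x : J → X → ℝ)
    (hpos : ∀ i, ∀ p ∈ U i, 0 < x i p)
    (M : ℝ) (hM : 1 ≤ M)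
    (hcomp : ∀ i j, ∀ p ∈ U i ∩ U j, x j p / M ≤ x i p ∧ x i p ≤ M * x j p)
    (δ : ℝ) (hδ0 : 0 < δ) (hδ : δ ≤ min (1/4) (M^2)⁻¹)
    (χ₀ : X → ℝ) (χ : J → X → ℝ)
    (hχ₀01 : ∀ p, 0 ≤ χ₀ p ∧ χ₀ p ≤ 1)
    (hχ01 : ∀ j p, 0 ≤ χ j p ∧ χ j p ≤ 1)
    (hsum : ∀ p, χ₀ p + ∑ j, χ j p = 1)
    (hsupp : ∀ j p, p ∉ U j → χ j p = 0)
    (hχ₀ : ∀ p, (∃ j, p ∈ U j ∧ x j p ≤ 1/4) → χ₀ p = 0) :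
    ∃ ρ : X → ℝ, (∀ p, 0 < ρ p ∧ ρ p ≤ 1) ∧
      ∀ i, ∀ p ∈ U i,
        (x i p ≤ δ → x i p ≤ ρ p ∧ ρ p ≤ M^2/δ * x i p) ∧
        (δ ≤ x i p → ρ p = 1) := by
  have hδ4 : δ ≤ 1 / 4 := hδ.trans (min_le_left _ _)
  exact ⟨partitionWeight χ₀ χ x M δ, stmt_0_general hpos (fun i j p hp => (hcomp i j p hp).2) hδ0
    (by linarith) (fun p => (hχ₀01 p).1) (fun j p => (hχ01 j p).1) (fun _ => Set.toFinite _)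
    (by simpa only [finsum_eq_sum_of_fintype] using hsum) hsupp
    fun i p hi hx => hχ₀ p ⟨i, hi, hx.trans hδ4⟩⟩
end

section
/- There exists a constant C > 0 such that for every integer k ≥ 1 and every z ∈ ℂ with z ∉ −ℕ₀, one has |Γ(z)Γ(k)/Γ(z+k)| ≤ C · 2^k · (1 + dist(z, −ℕ₀)^{-1}). -/
/-- The set of nonpositive integers `−ℕ₀ = {0, −1, −2, …}` in `ℂ`. -/
def negNat0 : Set ℂ := {w : ℂ | ∃ m : ℕ, w = -(m : ℂ)}

/-!
The Beta function `B(z, w) = Γ(z) Γ(w) / Γ(z + w)` satisfies `B(z, w + 1) = B(z, w) - B(z + 1, w)`.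
Iterating from `B(z, 1) = 1 / z` gives the partial fraction expansion
`B(z, n + 1) = ∑ j ≤ n, (-1) ^ j * n.choose j / (z + j)`. Each `z + j` has norm at least
`dist(z, −ℕ₀)` and the binomial coefficients add up to `2 ^ n`, so `C = 1` works.
-/

section NonposIntegers

variable {z : ℂ}

theorem isClosed_negNat0 : IsClosed negNat0 := by
  have image_eq : ((↑) : ℤ → ℂ) '' Set.range (fun m : ℕ ↦ -(m : ℤ)) = negNat0 := by
    ext w
    simp [negNat0, eq_comm]
  rw [← image_eq]
  exact Complex.isClosedEmbedding_intCast.isClosedMap _ (isClosed_discrete _)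

theorem infDist_negNat0_pos (hz : z ∉ negNat0) : 0 < Metric.infDist z negNat0 :=
  (isClosed_negNat0.notMem_iff_infDist_pos ⟨_, 0, rfl⟩).mp hz

theorem infDist_negNat0_le_norm_add_natCast (z : ℂ) (j : ℕ) :
    Metric.infDist z negNat0 ≤ ‖z + j‖ := by
  have neg_mem : -(j : ℂ) ∈ negNat0 := ⟨j, rfl⟩
  simpa only [dist_eq_norm, sub_neg_eq_add] using Metric.infDist_le_dist_of_mem (x := z) neg_mem

theorem add_natCast_ne_zero_of_notMem_negNat0 (hz : z ∉ negNat0) (j : ℕ) : z + j ≠ 0 :=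
  fun h ↦ hz ⟨j, eq_neg_of_add_eq_zero_left h⟩

theorem ne_zero_of_notMem_negNat0 (hz : z ∉ negNat0) : z ≠ 0 := by
  simpa using add_natCast_ne_zero_of_notMem_negNat0 hz 0

theorem add_natCast_notMem_negNat0 (hz : z ∉ negNat0) (j : ℕ) : z + j ∉ negNat0 := by
  rintro ⟨m, hm⟩
  refine hz ⟨m + j, ?_⟩
  push_cast
  linear_combination hm

theorem one_notMem_negNat0 : (1 : ℂ) ∉ negNat0 := by
  rintro ⟨m, hm⟩
  exact Nat.cast_add_one_ne_zero (R := ℂ) m (by linear_combination hm)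

end NonposIntegers

/-- The Beta function `B(z, w) = Γ(z) Γ(w) / Γ(z + w)`, continued meromorphically to `ℂ × ℂ`.
Unlike `Complex.betaIntegral`, it is meaningful whenever `z` and `w` are not nonpositive integers;
at the zeros of `1 / Γ(z + w)` the division convention gives the correct value `0`. -/
noncomputable def betaFunction (z w : ℂ) : ℂ :=
  Complex.Gamma z * Complex.Gamma w / Complex.Gamma (z + w)

section BetaFunction

variable {z w : ℂ}

theorem betaFunction_one_right (hz : z ∉ negNat0) : betaFunction z 1 = z⁻¹ := by
  have Gamma_ne_zero : Complex.Gamma z ≠ 0 := Complex.Gamma_ne_zero fun m hm ↦ hz ⟨m, hm⟩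
  rw [betaFunction, Complex.Gamma_one, mul_one,
    Complex.Gamma_add_one z (ne_zero_of_notMem_negNat0 hz), div_mul_cancel_right₀ Gamma_ne_zero]

theorem betaFunction_add_one_right (hz : z ≠ 0) (hw : w ≠ 0) :
    betaFunction z (w + 1) = betaFunction z w - betaFunction (z + 1) w := by
  rw [betaFunction, betaFunction, betaFunction, Complex.Gamma_add_one z hz,
    Complex.Gamma_add_one w hw, add_right_comm z 1 w, ← add_assoc z w 1]
  simp only [div_eq_mul_inv]
  rw [Complex.one_div_Gamma_eq_self_mul_one_div_Gamma_add_one (z + w)]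
  ring

theorem betaFunction_add_natCast_right (hz : z ∉ negNat0) (hw : w ∉ negNat0) (n : ℕ) :
    betaFunction z (w + n) =
      ∑ j ∈ Finset.range (n + 1), (n.choose j : ℂ) * ((-1) ^ j * betaFunction (z + j) w) := by
  induction n generalizing z with
  | zero => simp
  | succ n ih =>
    have hz_succ : z + 1 ∉ negNat0 := by simpa using add_natCast_notMem_negNat0 hz 1
    have shift (j : ℕ) : z + 1 + j = z + (j + 1 : ℕ) := by push_cast; ring
    rw [Finset.sum_choose_succ_mul (fun j _ ↦ (-1) ^ j * betaFunction (z + j) w) n,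
      Nat.cast_add_one, ← add_assoc,
      betaFunction_add_one_right (ne_zero_of_notMem_negNat0 hz)
        (add_natCast_ne_zero_of_notMem_negNat0 hw n),
      ih hz, ih hz_succ]
    simp only [shift, pow_succ, mul_neg, mul_one, neg_mul, Finset.sum_neg_distrib, sub_eq_add_neg]

theorem betaFunction_natCast_add_one_right (hz : z ∉ negNat0) (n : ℕ) :
    betaFunction z (n + 1) =
      ∑ j ∈ Finset.range (n + 1), (n.choose j : ℂ) * ((-1) ^ j * (z + j)⁻¹) := by
  rw [add_comm (n : ℂ) 1, betaFunction_add_natCast_right hz one_notMem_negNat0]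
  simp only [betaFunction_one_right (add_natCast_notMem_negNat0 hz _)]

theorem norm_betaFunction_natCast_add_one_right_le (hz : z ∉ negNat0) (n : ℕ) :
    ‖betaFunction z (n + 1)‖ ≤ 2 ^ n * (Metric.infDist z negNat0)⁻¹ := by
  have norm_inv_le (j : ℕ) : ‖(z + j)⁻¹‖ ≤ (Metric.infDist z negNat0)⁻¹ := by
    rw [norm_inv]
    exact inv_anti₀ (infDist_negNat0_pos hz) (infDist_negNat0_le_norm_add_natCast z j)
  calc ‖betaFunction z (n + 1)‖
    _ ≤ ∑ j ∈ Finset.range (n + 1), ‖(n.choose j : ℂ) * ((-1) ^ j * (z + j)⁻¹)‖ := by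
      rw [betaFunction_natCast_add_one_right hz]
      exact norm_sum_le _ _
    _ = ∑ j ∈ Finset.range (n + 1), (n.choose j : ℝ) * ‖(z + j)⁻¹‖ := by
      simp only [norm_mul, norm_pow, norm_neg, norm_one, one_pow, one_mul, Complex.norm_natCast]
    _ ≤ ∑ j ∈ Finset.range (n + 1), (n.choose j : ℝ) * (Metric.infDist z negNat0)⁻¹ := by
      gcongr with j
      exact norm_inv_le j
    _ = 2 ^ n * (Metric.infDist z negNat0)⁻¹ := by
      rw [← Finset.sum_mul, ← Nat.cast_sum, Nat.sum_range_choose, Nat.cast_pow, Nat.cast_ofNat]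

end BetaFunction

theorem stmt_1 :
    ∃ C : ℝ, 0 < C ∧ ∀ k : ℕ, 1 ≤ k → ∀ z : ℂ, z ∉ negNat0 →
      ‖Complex.Gamma z * Complex.Gamma (k : ℂ) / Complex.Gamma (z + k)‖ ≤
        C * 2 ^ k * (1 + (Metric.infDist z negNat0)⁻¹) := by
  refine ⟨1, one_pos, fun k hk z hz ↦ ?_⟩
  obtain ⟨n, rfl⟩ := Nat.exists_eq_add_of_le' hk
  calc ‖Complex.Gamma z * Complex.Gamma ↑(n + 1) / Complex.Gamma (z + ↑(n + 1))‖
    _ = ‖betaFunction z (n + 1)‖ := by rw [betaFunction, Nat.cast_add_one]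
    _ ≤ 2 ^ n * (Metric.infDist z negNat0)⁻¹ := norm_betaFunction_natCast_add_one_right_le hz n
    _ ≤ 1 * 2 ^ (n + 1) * (1 + (Metric.infDist z negNat0)⁻¹) := by
      rw [one_mul]
      gcongr
      · exact inv_nonneg.mpr Metric.infDist_nonneg
      · exact one_le_two
      · exact n.le_succ
      · exact le_add_of_nonneg_left zero_le_one
end

section
/- There exists a constant C > 0 such that for every integer k ≥ 1 and every z ∈ ℂ with z ∉ −ℕ₀, one has |Γ(z+k)/(Γ(z)Γ(k))| ≤ 2^{k+|z|} · e^{(π/2)|Im z|} · (1 + dist(z, −k−ℕ₀)^{-1}) · C · (2 + |z| + k)^C, where −k−ℕ₀ denotes the set {−k, −k−1, −k−2, …}. -/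
/-- The set `−k − ℕ₀ = {−k, −k−1, −k−2, …}` in `ℂ`. -/
def negShift (k : ℕ) : Set ℂ := {w : ℂ | ∃ m : ℕ, w = -(k : ℂ) - (m : ℂ)}

/-!
For `k ≥ 1` the quotient `Γ(z+k) / (Γ(z) Γ(k))` equals `k (z)ₖ / k!`, where
`(z)ₖ = z (z+1) ⋯ (z+k-1)`. Factor by factor `|(z)ₖ| ≤ (|z|)ₖ`, and enlarging `|z|` to the integer
`N + 1` with `N = ⌊|z|⌋` turns `(|z|)ₖ / k!` into the binomial coefficient
`(N+k).choose k ≤ 2 ^ (N+k) ≤ 2 ^ (k+|z|)`. So the quotient is at most `k 2 ^ (k+|z|)`. Since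
the exponential and distance factors are at least `1`, the constant `C = 1` suffices.
-/

open scoped Nat

theorem norm_ascPochhammer_eval_le {R : Type*} [SeminormedRing R] [NormOneClass R] (n : ℕ) (a : R) :
    ‖(ascPochhammer R n).eval a‖ ≤ (ascPochhammer ℝ n).eval ‖a‖ := by
  induction n with
  | zero => simp
  | succ n ih =>
    have hfactor : ‖a + n‖ ≤ ‖a‖ + n :=
      norm_add_le_of_le le_rfl (by simpa using n.norm_cast_le (α := R))
    rw [ascPochhammer_succ_eval, ascPochhammer_succ_eval]
    exact norm_mul_le_of_le ih hfactor

section OrderedSemiring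

variable {S : Type*} [Semiring S] [PartialOrder S] [IsOrderedRing S]

theorem ascPochhammer_eval_nonneg (n : ℕ) {s : S} (hs : 0 ≤ s) :
    0 ≤ (ascPochhammer S n).eval s := by
  induction n with
  | zero => simp
  | succ n ih =>
    rw [ascPochhammer_succ_eval]
    positivity

theorem monotoneOn_ascPochhammer_eval (n : ℕ) :
    MonotoneOn (ascPochhammer S n).eval (Set.Ici 0) := by
  intro s hs t ht hst
  induction n with
  | zero => simp
  | succ n ih =>
    have hs₀ : 0 ≤ s + n := add_nonneg hs n.cast_nonneg
    simp only [ascPochhammer_succ_eval]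
    exact mul_le_mul ih (by gcongr) hs₀ (ascPochhammer_eval_nonneg n ht)

end OrderedSemiring

theorem ascPochhammer_eval_le_factorial_mul_two_rpow (n : ℕ) {x : ℝ} (hx : 0 ≤ x) :
    (ascPochhammer ℝ n).eval x ≤ n ! * (2 : ℝ) ^ (n + x) := by
  have hfloor : x ≤ (⌊x⌋₊ + 1 : ℕ) := by exact_mod_cast (Nat.lt_floor_add_one x).le
  calc (ascPochhammer ℝ n).eval x
      ≤ (ascPochhammer ℝ n).eval ((⌊x⌋₊ + 1 : ℕ) : ℝ) :=
        monotoneOn_ascPochhammer_eval n hx (hx.trans hfloor) hfloor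
    _ = n ! * ((⌊x⌋₊ + n).choose n : ℝ) := by
        rw [← Nat.cast_ascFactorial, Nat.ascFactorial_eq_factorial_mul_choose, Nat.cast_mul]
    _ ≤ n ! * (2 : ℝ) ^ (⌊x⌋₊ + n) := by
        gcongr
        exact_mod_cast Nat.choose_le_two_pow _ _
    _ ≤ n ! * (2 : ℝ) ^ (n + x) := by
        rw [← Real.rpow_natCast, Nat.cast_add, add_comm]
        gcongr
        · exact one_le_two
        · exact Nat.floor_le hx

theorem Gamma_add_natCast_div_eq_ascPochhammer {z : ℂ} (hz : ∀ m : ℕ, z ≠ -m) {k : ℕ}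
    (hk : k ≠ 0) :
    Complex.Gamma (z + k) / (Complex.Gamma z * Complex.Gamma k) =
      k * (ascPochhammer ℂ k).eval z / k ! := by
  obtain ⟨m, rfl⟩ := Nat.exists_eq_succ_of_ne_zero hk
  have hm : ((m.succ : ℕ) : ℂ) ≠ 0 := Nat.cast_ne_zero.2 hk
  rw [← div_div, Complex.Gamma_add_nat_div_Gamma_eq z hz, Nat.factorial_succ, Nat.cast_mul,
    mul_div_mul_left _ _ hm, Nat.cast_succ, Complex.Gamma_nat_eq_factorial]

theorem norm_Gamma_add_natCast_div_le {z : ℂ} (hz : ∀ m : ℕ, z ≠ -m) {k : ℕ} (hk : k ≠ 0) :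
    ‖Complex.Gamma (z + k) / (Complex.Gamma z * Complex.Gamma k)‖ ≤ k * (2 : ℝ) ^ (k + ‖z‖) := by
  have hpoch : ‖(ascPochhammer ℂ k).eval z‖ ≤ k ! * (2 : ℝ) ^ (k + ‖z‖) :=
    (norm_ascPochhammer_eval_le k z).trans
      (ascPochhammer_eval_le_factorial_mul_two_rpow k (norm_nonneg z))
  rw [Gamma_add_natCast_div_eq_ascPochhammer hz hk, norm_div, norm_mul, Complex.norm_natCast,
    Complex.norm_natCast, div_le_iff₀ (by positivity), mul_assoc, mul_comm _ (k ! : ℝ)]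
  gcongr

theorem stmt_2 :
    ∃ C : ℝ, 0 < C ∧ ∀ k : ℕ, 1 ≤ k → ∀ z : ℂ, z ∉ negNat0 →
      ‖Complex.Gamma (z + k) / (Complex.Gamma z * Complex.Gamma (k : ℂ))‖ ≤
        (2 : ℝ) ^ ((k : ℝ) + ‖z‖) * Real.exp (Real.pi / 2 * |z.im|) *
          (1 + (Metric.infDist z (negShift k))⁻¹) * (C * (2 + ‖z‖ + k) ^ C) := by
  refine ⟨1, one_pos, fun k hk z hz => ?_⟩
  have hexp : 1 ≤ Real.exp (Real.pi / 2 * |z.im|) := Real.one_le_exp (by positivity)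
  have hdist : 1 ≤ 1 + (Metric.infDist z (negShift k))⁻¹ :=
    le_add_of_nonneg_right (inv_nonneg.2 Metric.infDist_nonneg)
  have hpoly : (k : ℝ) ≤ 1 * (2 + ‖z‖ + k) ^ (1 : ℝ) := by
    rw [one_mul, Real.rpow_one]
    exact le_add_of_nonneg_left (by positivity)
  calc ‖Complex.Gamma (z + k) / (Complex.Gamma z * Complex.Gamma k)‖
      ≤ k * (2 : ℝ) ^ (k + ‖z‖) :=
        norm_Gamma_add_natCast_div_le (fun m hm => hz ⟨m, hm⟩) (Nat.one_le_iff_ne_zero.1 hk)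
    _ = (2 : ℝ) ^ (k + ‖z‖) * 1 * 1 * k := by ring
    _ ≤ _ := by gcongr
end

section
/- For every z ∈ ℂ with Re z ≥ 0 and every real k > 0, one has 0 ≤ (Im z)·(arg(z) − arg(z+k)) ≤ (π/2)·|Im z|, where arg denotes the principal argument taking values in (−π, π]. -/
/-!
The sign of `arg z` is that of `Im z`, which `z` and `z + k` share, so
`Im z * (arg z - arg (z + k)) = |Im z| * (|arg z| - |arg (z + k)|)`. Now `|arg z|` is the angle
between `z` and the positive real axis; adding `k` to `z` shrinks it, and it is at most `π / 2`
when `0 ≤ Re z`.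
-/

open InnerProductGeometry

theorem angle_add_le_angle {V : Type*} [NormedAddCommGroup V] [InnerProductSpace ℝ V]
    (x : V) {y : V} (hy : y ≠ 0) : angle x (x + y) ≤ angle x y := by
  rw [angle_eq_angle_add_add_angle_add x hy]
  exact le_add_of_nonneg_right (angle_nonneg y (x + y))

theorem angle_ofReal_left {k : ℝ} (hk : 0 < k) {z : ℂ} (hz : z ≠ 0) :
    angle (k : ℂ) z = |z.arg| := by
  rw [← Complex.angle_one_left hz, ← angle_smul_left_of_pos 1 z hk, Complex.real_smul, mul_one]

theorem abs_arg_add_ofReal_le (z : ℂ) {k : ℝ} (hk : 0 ≤ k) : |(z + k).arg| ≤ |z.arg| := by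
  rcases hk.eq_or_lt with rfl | hk
  · rw [Complex.ofReal_zero, add_zero]
  rcases eq_or_ne z 0 with rfl | hz
  · rw [zero_add, Complex.arg_ofReal_of_nonneg hk.le, Complex.arg_zero]
  rcases eq_or_ne (z + k) 0 with hzk | hzk
  · simp only [hzk, Complex.arg_zero, abs_zero, abs_nonneg]
  · rw [← angle_ofReal_left hk hz, ← angle_ofReal_left hk hzk, add_comm]
    exact angle_add_le_angle (k : ℂ) hz

theorem im_mul_arg_eq_abs_mul_abs (z : ℂ) : z.im * z.arg = |z.im| * |z.arg| := by
  rw [← abs_mul, eq_comm, abs_eq_self]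
  rcases le_or_gt 0 z.im with him | him
  · exact mul_nonneg him (Complex.arg_nonneg_iff.mpr him)
  · exact (mul_pos_of_neg_of_neg him (Complex.arg_neg_iff.mpr him)).le

theorem im_mul_arg_sub_arg_add_ofReal (z : ℂ) (k : ℝ) :
    z.im * (z.arg - (z + k).arg) = |z.im| * (|z.arg| - |(z + k).arg|) := by
  have him : (z + k).im = z.im := by simp
  have hzk : z.im * (z + k).arg = |z.im| * |(z + k).arg| := him ▸ im_mul_arg_eq_abs_mul_abs (z + k)
  rw [mul_sub, mul_sub, im_mul_arg_eq_abs_mul_abs z, hzk]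

theorem stmt_4_general (z : ℂ) {k : ℝ} (hk : 0 ≤ k) :
    0 ≤ z.im * (z.arg - (z + k).arg) ∧ z.im * (z.arg - (z + k).arg) ≤ |z.arg| * |z.im| := by
  rw [im_mul_arg_sub_arg_add_ofReal, mul_comm |z.arg|]
  exact ⟨mul_nonneg (abs_nonneg _) (sub_nonneg.mpr (abs_arg_add_ofReal_le z hk)),
    mul_le_mul_of_nonneg_left (sub_le_self _ (abs_nonneg _)) (abs_nonneg _)⟩

theorem stmt_4 (z : ℂ) (hz : 0 ≤ z.re) (k : ℝ) (hk : 0 < k) :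
    0 ≤ z.im * (Complex.arg z - Complex.arg (z + k)) ∧
      z.im * (Complex.arg z - Complex.arg (z + k)) ≤ Real.pi / 2 * |z.im| :=
  (stmt_4_general z hk.le).imp_right fun h => h.trans <|
    mul_le_mul_of_nonneg_right (Complex.abs_arg_le_pi_div_two_iff.mpr hz) (abs_nonneg _)
end

section
/- For every ε > 0 there exists a constant C_ε > 0 such that for every λ ∈ ℂ with dist(λ, −ℕ) ≥ ε (where −ℕ = {−1, −2, −3, …}), every integer j ≥ 1, and every integer k ≥ 0, one has |2^{−2k−2} · Γ(j)Γ(λ+j) / (Γ(j+k+1)Γ(λ+j+k+1))| ≤ C_ε / Γ(k+1)². -/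
/-- The set of negative integers `−ℕ = {−1, −2, −3, …}` in `ℂ`. -/
def negNat : Set ℂ := {w : ℂ | ∃ m : ℕ, w = -((m : ℂ) + 1)}

/-!
Each quotient `Γ(z) / Γ(z + k + 1)` is the inverse of the rising factorial `z (z + 1) ⋯ (z + k)`.
For `z = j ≥ 1` the rising factorial is at least `(k + 1)!`. For `z = λ + j`, let `-n` be the point
of `{0, -1, …, -k}` nearest to `z`: the factor at `n` is at least `ε`, and every other factor is at
least `|i - n| / 2`, so the product is at least `ε n! (k - n)! / 2 ^ k ≥ ε k! / 4 ^ k`. The power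
`2 ^ (-2 k - 2)` absorbs the loss of `4 ^ k`.
-/

open Finset Polynomial
open scoped Nat NNReal

theorem prod_dist_range (n : ℕ) : ∏ i ∈ range n, dist i n = (n ! : ℝ) := by
  rw [← prod_range_add_one_eq_factorial, ← prod_range_reflect (fun i => i + 1), Nat.cast_prod]
  refine prod_congr rfl fun i hi => ?_
  obtain ⟨m, rfl⟩ := Nat.exists_eq_add_of_lt (mem_range.mp hi)
  rw [dist_comm, Nat.dist_eq, show i + m + 1 - 1 - i = m by omega]
  push_cast
  rw [add_assoc, add_sub_cancel_left, abs_of_nonneg (by positivity)]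

theorem prod_dist_erase_range (n m : ℕ) :
    ∏ i ∈ (range (n + m + 1)).erase n, dist i n = (n ! * m ! : ℝ) := by
  have hsplit : (range (n + m + 1)).erase n = range n ∪ Ico (n + 1) (n + m + 1) := by
    ext i
    simp only [mem_erase, mem_union, mem_range, mem_Ico]
    omega
  have hdisj : Disjoint (range n) (Ico (n + 1) (n + m + 1)) :=
    disjoint_left.mpr fun i hi hi' => by
      simp only [mem_range, mem_Ico] at hi hi'
      omega
  have hright : ∏ i ∈ Ico (n + 1) (n + m + 1), dist i n = (m ! : ℝ) := by
    rw [prod_Ico_eq_prod_range, ← prod_range_add_one_eq_factorial, Nat.cast_prod,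
      show n + m + 1 - (n + 1) = m by omega]
    refine prod_congr rfl fun i _ => ?_
    rw [Nat.dist_eq]
    push_cast
    rw [show (n : ℝ) + 1 + i - n = i + 1 by ring, abs_of_nonneg (by positivity)]
  rw [hsplit, prod_union hdisj, prod_dist_range, hright]

theorem factorial_add_le_two_pow_mul (n m : ℕ) : (n + m)! ≤ 2 ^ (n + m) * (n ! * m !) := by
  rw [← Nat.add_choose_mul_factorial_mul_factorial n m, mul_assoc]
  exact Nat.mul_le_mul_right _ (Nat.choose_le_two_pow _ _)

theorem mul_factorial_le_pow_mul_prod_dist {E : Type*} [PseudoMetricSpace E] {K : ℝ≥0}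
    {x : ℕ → E} (hx : AntilipschitzWith K x) (p : E) {ε : ℝ} {k : ℕ}
    (hp : ∀ i ≤ k, ε ≤ dist p (x i)) :
    ε * k ! ≤ (4 * K) ^ k * ∏ i ∈ range (k + 1), dist p (x i) := by
  obtain ⟨n, hn, hnearest⟩ := exists_min_image (range (k + 1)) (fun i => dist p (x i)) ⟨0, by simp⟩
  have hdist : ∀ i ∈ (range (k + 1)).erase n, dist i n ≤ 2 * K * dist p (x i) := fun i hi =>
    calc dist i n ≤ K * dist (x i) (x n) := hx.le_mul_dist i n
      _ ≤ K * (dist p (x i) + dist p (x n)) := by gcongr; exact dist_triangle_left _ _ _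
      _ ≤ K * (dist p (x i) + dist p (x i)) := by gcongr; exact hnearest i (mem_of_mem_erase hi)
      _ = 2 * K * dist p (x i) := by ring
  obtain ⟨m, rfl⟩ := Nat.exists_eq_add_of_le (Nat.lt_succ_iff.mp (mem_range.mp hn))
  have hothers : (n ! * m ! : ℝ) ≤
      (2 * K) ^ (n + m) * ∏ i ∈ (range (n + m + 1)).erase n, dist p (x i) := by
    have hcard : #((range (n + m + 1)).erase n) = n + m := by
      rw [card_erase_of_mem hn, card_range, Nat.add_sub_cancel]
    calc (n ! * m ! : ℝ) = ∏ i ∈ (range (n + m + 1)).erase n, dist i n :=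
          (prod_dist_erase_range n m).symm
      _ ≤ ∏ i ∈ (range (n + m + 1)).erase n, 2 * K * dist p (x i) :=
          prod_le_prod (fun _ _ => dist_nonneg) hdist
      _ = _ := by rw [prod_mul_distrib, prod_const, hcard]
  calc ε * (n + m)! ≤ dist p (x n) * (2 ^ (n + m) * (n ! * m !)) := by
        gcongr
        · exact hp n (Nat.le_add_right n m)
        · exact_mod_cast factorial_add_le_two_pow_mul n m
    _ ≤ dist p (x n) * (2 ^ (n + m) *
        ((2 * K) ^ (n + m) * ∏ i ∈ (range (n + m + 1)).erase n, dist p (x i))) := by gcongr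
    _ = (4 * K) ^ (n + m) * ∏ i ∈ range (n + m + 1), dist p (x i) := by
        rw [← mul_prod_erase _ _ hn, show (4 * K : ℝ) = 2 * (2 * K) by ring,
          mul_pow (2 : ℝ) (2 * K)]
        ring

theorem ascPochhammer_eval_eq_prod_range {R : Type*} [CommSemiring R] (n : ℕ) (r : R) :
    (ascPochhammer R n).eval r = ∏ i ∈ range n, (r + i) := by
  induction n with
  | zero => simp
  | succ n ih => rw [ascPochhammer_succ_eval, ih, prod_range_succ]

theorem mul_factorial_le_four_pow_mul_norm_ascPochhammer_eval {𝕜 : Type*} [NormedField 𝕜]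
    [NormedAlgebra ℝ 𝕜] (z : 𝕜) {ε : ℝ} {k : ℕ} (hz : ∀ i ≤ k, ε ≤ ‖z + (i : 𝕜)‖) :
    ε * k ! ≤ 4 ^ k * ‖(ascPochhammer 𝕜 (k + 1)).eval z‖ := by
  have hneg : AntilipschitzWith 1 fun i : ℕ => -(i : 𝕜) :=
    (Isometry.of_dist_eq fun i j => by
      rw [dist_neg_neg, dist_eq_norm, Nat.dist_eq, ← Real.norm_eq_abs,
        ← norm_algebraMap' 𝕜 ((i : ℝ) - j), map_sub, map_natCast, map_natCast]).antilipschitz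
  simpa only [dist_eq_norm, sub_neg_eq_add, NNReal.coe_one, mul_one, ← norm_prod,
    ← ascPochhammer_eval_eq_prod_range] using
    mul_factorial_le_pow_mul_prod_dist hneg z (by simpa only [dist_eq_norm, sub_neg_eq_add])

theorem factorial_le_norm_ascPochhammer_eval {𝕜 : Type*} [RCLike 𝕜] {z : 𝕜}
    (hz : 1 ≤ RCLike.re z) (n : ℕ) : (n ! : ℝ) ≤ ‖(ascPochhammer 𝕜 n).eval z‖ := by
  rw [ascPochhammer_eval_eq_prod_range, norm_prod, ← prod_range_add_one_eq_factorial,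
    Nat.cast_prod]
  refine prod_le_prod (fun _ _ => by positivity) fun i _ => ?_
  calc ((i + 1 : ℕ) : ℝ) ≤ RCLike.re (z + i) := by
        rw [map_add, RCLike.natCast_re]
        push_cast
        linarith
    _ ≤ ‖z + i‖ := RCLike.re_le_norm _

theorem Gamma_div_Gamma_add_nat_eq_inv {z : ℂ} (hz : ∀ m : ℕ, z ≠ -m) (n : ℕ) :
    Complex.Gamma z / Complex.Gamma (z + n) = ((ascPochhammer ℂ n).eval z)⁻¹ := by
  rw [← Complex.Gamma_add_nat_div_Gamma_eq z hz, inv_div]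

theorem norm_Gamma_div_Gamma_add_nat_le {z : ℂ} (hz : 1 ≤ z.re) (n : ℕ) :
    ‖Complex.Gamma z / Complex.Gamma (z + n)‖ ≤ (n ! : ℝ)⁻¹ := by
  have hne : ∀ m : ℕ, z ≠ -m := by
    rintro m rfl
    rw [Complex.neg_re, Complex.natCast_re] at hz
    linarith [m.cast_nonneg (α := ℝ)]
  rw [Gamma_div_Gamma_add_nat_eq_inv hne, norm_inv]
  exact inv_anti₀ (by positivity) (factorial_le_norm_ascPochhammer_eval hz n)

theorem norm_Gamma_div_Gamma_add_succ_le_of_le_norm_add {z : ℂ} {ε : ℝ} (hε : 0 < ε)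
    (hz : ∀ i : ℕ, ε ≤ ‖z + i‖) (k : ℕ) :
    ‖Complex.Gamma z / Complex.Gamma (z + (k + 1 : ℕ))‖ ≤ 4 ^ k / (ε * k !) := by
  have hne : ∀ m : ℕ, z ≠ -m := fun m hm => by
    have := hz m
    rw [hm, neg_add_cancel, norm_zero] at this
    linarith
  have hpoch := mul_factorial_le_four_pow_mul_norm_ascPochhammer_eval z (k := k) fun i _ => hz i
  have hpos : 0 < ε * k ! := by positivity
  rw [Gamma_div_Gamma_add_nat_eq_inv hne, norm_inv, le_div_iff₀ hpos]
  exact inv_mul_le_of_le_mul₀ (norm_nonneg _) (by positivity) (by rwa [mul_comm ‖_‖])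

theorem infDist_negNat_le_norm_add_natCast (z : ℂ) {n : ℕ} (hn : n ≠ 0) :
    Metric.infDist z negNat ≤ ‖z + n‖ := by
  obtain ⟨m, rfl⟩ := Nat.exists_eq_succ_of_ne_zero hn
  have hmem : -((m : ℂ) + 1) ∈ negNat := ⟨m, rfl⟩
  simpa only [dist_eq_norm, sub_neg_eq_add, Nat.cast_succ] using Metric.infDist_le_dist_of_mem hmem

theorem stmt_6 (ε : ℝ) (hε : 0 < ε) :
    ∃ C : ℝ, 0 < C ∧ ∀ lam : ℂ, ε ≤ Metric.infDist lam negNat →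
      ∀ j : ℕ, 1 ≤ j → ∀ k : ℕ,
        ‖(2 : ℂ) ^ (-(2 * (k : ℤ)) - 2) * Complex.Gamma (j : ℂ) * Complex.Gamma (lam + j) /
            (Complex.Gamma ((j : ℂ) + k + 1) * Complex.Gamma (lam + j + k + 1))‖ ≤
          C / (Real.Gamma ((k : ℝ) + 1)) ^ 2 := by
  refine ⟨(4 * ε)⁻¹, by positivity, fun lam hlam j hj k => ?_⟩
  have hj_quot := norm_Gamma_div_Gamma_add_nat_le (z := j) (by simpa using hj) (k + 1)
  have hfar : ∀ i : ℕ, ε ≤ ‖lam + j + i‖ := fun i => by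
    simpa only [Nat.cast_add, add_assoc] using
      hlam.trans (infDist_negNat_le_norm_add_natCast lam (n := j + i) (by omega))
  have hlam_quot := norm_Gamma_div_Gamma_add_succ_le_of_le_norm_add hε hfar k
  have hpow : ‖(2 : ℂ) ^ (-(2 * (k : ℤ)) - 2)‖ = (4 ^ (k + 1))⁻¹ := by
    rw [show -(2 * (k : ℤ)) - 2 = -((2 * (k + 1) : ℕ) : ℤ) by push_cast; ring, zpow_neg,
      zpow_natCast, pow_mul]
    norm_num
  have hfact : ((k + 1)! : ℝ)⁻¹ ≤ (k ! : ℝ)⁻¹ :=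
    inv_anti₀ (by positivity) (by exact_mod_cast Nat.factorial_le k.le_succ)
  rw [Nat.cast_succ, ← add_assoc] at hj_quot hlam_quot
  rw [mul_assoc, mul_div_assoc, mul_div_mul_comm, norm_mul, norm_mul, hpow,
    Real.Gamma_nat_eq_factorial]
  calc _ ≤ ((4 : ℝ) ^ (k + 1))⁻¹ * ((k ! : ℝ)⁻¹ * (4 ^ k / (ε * k !))) := by
        gcongr
        exact hj_quot.trans hfact
    _ = (4 * ε)⁻¹ / (k ! : ℝ) ^ 2 := by
        rw [pow_succ]
        field_simp
end

section
/- Let q ≥ 1 be an integer and define a sequence of positive integers by a_1 = 2 and a_{l+1} = 2^{(a_l)^q} for l ≥ 1. Then for every k ≥ 1 the series ∑_{l=k+1}^∞ a_k/a_l converges, and a_k/a_{k+1} ≤ ∑_{l=k+1}^∞ a_k/a_l ≤ 2·a_k/a_{k+1}. -/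
/-!
Since `b * n ≤ b ^ n ≤ b ^ (n ^ q)`, the terms `v l = a k / a (k + 1 + l)` shrink by a factor of at
least `b` at each step. Peeling off the first term, their sum `S` satisfies `S ≤ v 0 + b⁻¹ * S`.
-/

theorem mul_le_pow_pow {b q : ℕ} (hb : 2 ≤ b) (hq : q ≠ 0) (n : ℕ) : b * n ≤ b ^ (n ^ q) :=
  calc b * n ≤ b ^ n := Nat.mul_le_pow (by omega) n
    _ ≤ b ^ (n ^ q) := Nat.pow_le_pow_right (by omega) (Nat.le_self_pow hq n)

theorem summable_of_nonneg_of_succ_le_mul {v : ℕ → ℝ} {r : ℝ} (hr : r < 1) (hv : ∀ n, 0 ≤ v n)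
    (h : ∀ n, v (n + 1) ≤ r * v n) : Summable v :=
  summable_of_ratio_norm_eventually_le hr <| .of_forall fun n => by
    simpa only [Real.norm_of_nonneg (hv _)] using h n

theorem tsum_le_of_succ_le_mul {v : ℕ → ℝ} {r : ℝ} (hr : r < 1) (hv : Summable v)
    (h : ∀ n, v (n + 1) ≤ r * v n) : ∑' n, v n ≤ (1 - r)⁻¹ * v 0 := by
  have self_bound : ∑' n, v n ≤ v 0 + r * ∑' n, v n :=
    calc ∑' n, v n = v 0 + ∑' n, v (n + 1) := hv.tsum_eq_zero_add
      _ ≤ v 0 + ∑' n, r * v n := by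
        gcongr 1
        exact ((summable_nat_add_iff 1).2 hv).tsum_le_tsum h (hv.mul_left r)
      _ = v 0 + r * ∑' n, v n := by rw [tsum_mul_left]
  rw [le_inv_mul_iff₀ (sub_pos.2 hr)]
  linarith

theorem div_le_inv_mul_div_of_mul_le {K : Type*} [Field K] [LinearOrder K] [IsStrictOrderedRing K]
    {c r x y : K} (hc : 0 ≤ c) (hr : 0 < r) (hx : 0 < x) (hxy : r * x ≤ y) :
    c / y ≤ r⁻¹ * (c / x) :=
  calc c / y ≤ c / (r * x) := by gcongr
    _ = r⁻¹ * (c / x) := by rw [div_mul_eq_div_div_swap, div_eq_inv_mul]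

theorem stmt_9_general {b q : ℕ} (hb : 2 ≤ b) (hq : 1 ≤ q) {a : ℕ → ℕ}
    (ha : ∀ l : ℕ, 1 ≤ l → a (l + 1) = b ^ (a l ^ q)) {k : ℕ} (hk : 1 ≤ k) :
    Summable (fun l : ℕ => (a k : ℝ) / (a (k + 1 + l) : ℝ)) ∧
    (a k : ℝ) / (a (k + 1) : ℝ) ≤ ∑' l : ℕ, (a k : ℝ) / (a (k + 1 + l) : ℝ) ∧
    ∑' l : ℕ, (a k : ℝ) / (a (k + 1 + l) : ℝ) ≤
      (1 - (b : ℝ)⁻¹)⁻¹ * ((a k : ℝ) / (a (k + 1) : ℝ)) := by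
  have hb_inv : (b : ℝ)⁻¹ < 1 := inv_lt_one_of_one_lt₀ (by exact_mod_cast hb)
  have tail_pos (l : ℕ) : 0 < a (k + 1 + l) := by
    rw [add_right_comm, ha (k + l) (by omega)]
    positivity
  have growth (l : ℕ) : b * a (k + 1 + l) ≤ a (k + 1 + (l + 1)) := by
    rw [← add_assoc, ha (k + 1 + l) (by omega)]
    exact mul_le_pow_pow hb (by omega) _
  have nonneg (l : ℕ) : 0 ≤ (a k : ℝ) / a (k + 1 + l) := by positivity
  have decay (l : ℕ) : (a k : ℝ) / a (k + 1 + (l + 1)) ≤ (b : ℝ)⁻¹ * (a k / a (k + 1 + l)) :=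
    div_le_inv_mul_div_of_mul_le (by positivity) (by positivity) (by exact_mod_cast tail_pos l)
      (by exact_mod_cast growth l)
  have summable := summable_of_nonneg_of_succ_le_mul hb_inv nonneg decay
  exact ⟨summable, summable.le_tsum 0 fun l _ => nonneg l,
    tsum_le_of_succ_le_mul hb_inv summable decay⟩

theorem stmt_9 (q : ℕ) (hq : 1 ≤ q) (a : ℕ → ℕ) (ha1 : a 1 = 2)
    (ha : ∀ l : ℕ, 1 ≤ l → a (l + 1) = 2 ^ (a l ^ q)) :
    ∀ k : ℕ, 1 ≤ k →
      Summable (fun l : ℕ => (a k : ℝ) / (a (k + 1 + l) : ℝ)) ∧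
      (a k : ℝ) / (a (k + 1) : ℝ) ≤ ∑' l : ℕ, (a k : ℝ) / (a (k + 1 + l) : ℝ) ∧
      ∑' l : ℕ, (a k : ℝ) / (a (k + 1 + l) : ℝ) ≤ 2 * ((a k : ℝ) / (a (k + 1) : ℝ)) := by
  have geometric_constant : (1 - ((2 : ℕ) : ℝ)⁻¹)⁻¹ = 2 := by norm_num
  exact fun k hk => geometric_constant ▸ stmt_9_general le_rfl hq ha hk
end

section
/- For every real x > 0 and every real σ > 0, one has ∫_x^∞ e^{−v}(v² − x²)^{σ − 1/2} dv ≤ Γ(2σ), where Γ is the Gamma function. -/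
open MeasureTheory

/-!
On the half-line `v > x ≥ 0` we have `(v - x) ^ 2 ≤ v ^ 2 - x ^ 2 ≤ v ^ 2`. According to the sign
of the exponent `r = σ - 1 / 2`, one of the two inequalities bounds `(v ^ 2 - x ^ 2) ^ r` by
`v ^ (2 * r)` or by `(v - x) ^ (2 * r)`, and the resulting integral is part or a translate of
Euler's integral for `Γ (2 * r + 1)`.
-/

section Pointwise

variable {x v r : ℝ}

lemma sq_sub_sq_rpow_le_rpow_of_nonneg (hv : 0 ≤ v) (hxv : x ^ 2 ≤ v ^ 2) (hr : 0 ≤ r) :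
    (v ^ 2 - x ^ 2) ^ r ≤ v ^ (2 * r) := calc
  (v ^ 2 - x ^ 2) ^ r ≤ (v ^ 2) ^ r :=
    Real.rpow_le_rpow (sub_nonneg.2 hxv) (sub_le_self _ (sq_nonneg x)) hr
  _ = v ^ (2 * r) := mod_cast (Real.rpow_natCast_mul hv 2 r).symm

lemma sq_sub_sq_rpow_le_sub_rpow_of_nonpos (hx : 0 ≤ x) (hxv : x < v) (hr : r ≤ 0) :
    (v ^ 2 - x ^ 2) ^ r ≤ (v - x) ^ (2 * r) := by
  have hvx : 0 < v - x := sub_pos.2 hxv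
  have sq_sub_le : (v - x) ^ 2 ≤ v ^ 2 - x ^ 2 := by
    linear_combination 2 * mul_nonneg hx hvx.le
  calc
    (v ^ 2 - x ^ 2) ^ r ≤ ((v - x) ^ 2) ^ r :=
      Real.rpow_le_rpow_of_nonpos (pow_pos hvx 2) sq_sub_le hr
    _ = (v - x) ^ (2 * r) := mod_cast (Real.rpow_natCast_mul hvx.le 2 r).symm

end Pointwise

section GammaIntegral

variable {s : ℝ}

lemma lintegral_Ioi_exp_neg_mul_rpow (hs : -1 < s) :
    ∫⁻ t in Set.Ioi (0 : ℝ), ENNReal.ofReal (Real.exp (-t) * t ^ s) =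
      ENNReal.ofReal (Real.Gamma (s + 1)) := by
  have hs' : 0 < s + 1 := by linarith
  have integrable := Real.GammaIntegral_convergent hs'
  rw [Real.Gamma_eq_integral hs']
  simp only [add_sub_cancel_right] at integrable ⊢
  refine (ofReal_integral_eq_lintegral_ofReal integrable ?_).symm
  filter_upwards [ae_restrict_mem measurableSet_Ioi] with t ht
  exact mul_nonneg (Real.exp_pos _).le (Real.rpow_nonneg (le_of_lt ht) _)

lemma setLIntegral_Ioi_comp_sub_right (f : ℝ → ENNReal) (a c : ℝ) :
    ∫⁻ v in Set.Ioi (a + c), f (v - c) = ∫⁻ t in Set.Ioi a, f t := by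
  simpa only [Set.preimage_sub_const_Ioi] using
    (measurePreserving_sub_right volume c).setLIntegral_comp_preimage_emb
      (MeasurableEquiv.subRight c).measurableEmbedding f (Set.Ioi a)

lemma lintegral_Ioi_exp_neg_mul_sub_rpow (c : ℝ) (hs : -1 < s) :
    ∫⁻ v in Set.Ioi c, ENNReal.ofReal (Real.exp (-v) * (v - c) ^ s) =
      ENNReal.ofReal (Real.exp (-c) * Real.Gamma (s + 1)) := by
  have factor (v : ℝ) : ENNReal.ofReal (Real.exp (-v) * (v - c) ^ s) =
      ENNReal.ofReal (Real.exp (-c)) *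
        ENNReal.ofReal (Real.exp (-(v - c)) * (v - c) ^ s) := by
    rw [← ENNReal.ofReal_mul (Real.exp_pos _).le, ← mul_assoc, ← Real.exp_add]
    ring_nf
  have translate := setLIntegral_Ioi_comp_sub_right
    (fun t => ENNReal.ofReal (Real.exp (-t) * t ^ s)) 0 c
  rw [zero_add] at translate
  simp only [factor]
  rw [lintegral_const_mul' _ _ ENNReal.ofReal_ne_top, translate,
    lintegral_Ioi_exp_neg_mul_rpow hs, ENNReal.ofReal_mul (Real.exp_pos _).le]

end GammaIntegral

section Bounds

variable {x r : ℝ}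

lemma lintegral_exp_neg_mul_sq_sub_sq_rpow_le_of_nonneg (hx : 0 ≤ x) (hr : 0 ≤ r) :
    ∫⁻ v in Set.Ioi x, ENNReal.ofReal (Real.exp (-v) * (v ^ 2 - x ^ 2) ^ r) ≤
      ENNReal.ofReal (Real.Gamma (2 * r + 1)) := calc
  ∫⁻ v in Set.Ioi x, ENNReal.ofReal (Real.exp (-v) * (v ^ 2 - x ^ 2) ^ r)
  _ ≤ ∫⁻ v in Set.Ioi x, ENNReal.ofReal (Real.exp (-v) * v ^ (2 * r)) := by
    refine setLIntegral_mono' measurableSet_Ioi fun v (hv : x < v) => ?_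
    gcongr
    exact sq_sub_sq_rpow_le_rpow_of_nonneg (hx.trans hv.le) (by gcongr) hr
  _ ≤ ∫⁻ v in Set.Ioi 0, ENNReal.ofReal (Real.exp (-v) * v ^ (2 * r)) :=
    lintegral_mono_set (Set.Ioi_subset_Ioi hx)
  _ = ENNReal.ofReal (Real.Gamma (2 * r + 1)) :=
    lintegral_Ioi_exp_neg_mul_rpow (by linarith)

lemma lintegral_exp_neg_mul_sq_sub_sq_rpow_le_of_nonpos (hx : 0 ≤ x) (hr : -(1 / 2) < r)
    (hr' : r ≤ 0) :
    ∫⁻ v in Set.Ioi x, ENNReal.ofReal (Real.exp (-v) * (v ^ 2 - x ^ 2) ^ r) ≤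
      ENNReal.ofReal (Real.exp (-x) * Real.Gamma (2 * r + 1)) := calc
  ∫⁻ v in Set.Ioi x, ENNReal.ofReal (Real.exp (-v) * (v ^ 2 - x ^ 2) ^ r)
  _ ≤ ∫⁻ v in Set.Ioi x, ENNReal.ofReal (Real.exp (-v) * (v - x) ^ (2 * r)) := by
    refine setLIntegral_mono' measurableSet_Ioi fun v (hv : x < v) => ?_
    gcongr
    exact sq_sub_sq_rpow_le_sub_rpow_of_nonpos hx hv hr'
  _ = ENNReal.ofReal (Real.exp (-x) * Real.Gamma (2 * r + 1)) :=
    lintegral_Ioi_exp_neg_mul_sub_rpow x (by linarith)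

end Bounds

theorem stmt_11 (x σ : ℝ) (hx : 0 < x) (hσ : 0 < σ) :
    ∫⁻ v in Set.Ici x, ENNReal.ofReal (Real.exp (-v) * (v ^ 2 - x ^ 2) ^ (σ - 1/2)) ≤
      ENNReal.ofReal (Real.Gamma (2 * σ)) := by
  rw [← restrict_Ioi_eq_restrict_Ici, show 2 * σ = 2 * (σ - 1 / 2) + 1 by ring]
  rcases le_total 0 (σ - 1 / 2) with hr | hr
  · exact lintegral_exp_neg_mul_sq_sub_sq_rpow_le_of_nonneg hx.le hr
  · have Gamma_nonneg : 0 ≤ Real.Gamma (2 * (σ - 1 / 2) + 1) :=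
      Real.Gamma_nonneg_of_nonneg (by linarith)
    refine (lintegral_exp_neg_mul_sq_sub_sq_rpow_le_of_nonpos hx.le (by linarith) hr).trans ?_
    gcongr
    exact mul_le_of_le_one_left Gamma_nonneg (Real.exp_le_one_iff.2 (neg_nonpos.2 hx.le))
end

section
/- Let n ∈ ℕ and ε > 0. Then there exist C > 0 and m ∈ ℕ such that for every s ∈ ℂ with dist(s, (n/2 − ℕ) ∪ (−ℕ₀)) > ε and every integer j ≥ 0, one has |2^{−2j}·Γ(s+2j)/(Γ(s − n/2 + 1 + j)·Γ(j+1))| ≤ e^{C(1+|s|)}·(1+j)^m. -/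
/-- The set `(n/2 − ℕ) ∪ (−ℕ₀)` in `ℂ`. -/
def polesSet (n : ℕ) : Set ℂ :=
  {w : ℂ | ∃ l : ℕ, 1 ≤ l ∧ w = (n : ℂ) / 2 - l} ∪ {w : ℂ | ∃ l : ℕ, w = -(l : ℂ)}

/-!
Put `a = n / 2`, `p = ⌊re a⌋₊` and `h = p + 1 - a`, so that `re h > 0` and the quantity to bound is
`Γ(s + 2j) / (4 ^ j * j! * Γ(s + h + j - p))`. The functional equation, applied `p + j` times, turns
the Gamma factor in the denominator into `Γ(s + 2j + h)`. The first `p` linear factors cost a power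
of `1 + j`, and the other `j` are comparable with `(2j)! / j! ≤ 4 ^ j * j!`, up to `exp ‖s + h‖`.

The ratio `Γ(z) / Γ(z + h)` is a Beta integral over `Γ(h)`, hence bounded for `re z ≥ 1`. Going left
from there by one unit multiplies the ratio by `1 + h / z`, which is at most `1 + ‖h‖ / ε` in norm
while `z` stays `ε`-away from the poles, and about `‖s‖` such units are needed.
-/

section GammaBounds

open Complex Finset
open scoped Nat

variable {ε : ℝ} {h z : ℂ}

lemma norm_betaIntegral_le_inv_re {u v : ℂ} (hu : 0 < u.re) (hv : 1 ≤ v.re) :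
    ‖betaIntegral u v‖ ≤ u.re⁻¹ := by
  have hexp : -1 < u.re - 1 := by linarith
  have hint : ∫ x : ℝ in 0..1, x ^ (u.re - 1) = u.re⁻¹ := by
    rw [integral_rpow (Or.inl hexp), sub_add_cancel, Real.one_rpow, Real.zero_rpow hu.ne',
      sub_zero, one_div]
  rw [← hint]
  refine intervalIntegral.norm_integral_le_of_norm_le zero_le_one ?_
    (intervalIntegral.intervalIntegrable_rpow' hexp)
  filter_upwards [MeasureTheory.Measure.ae_ne MeasureTheory.volume (1 : ℝ)] with x hx1 hx
  have hx' : 0 < 1 - x := sub_pos.2 (lt_of_le_of_ne hx.2 hx1)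
  rw [norm_mul, ← ofReal_one, ← ofReal_sub, norm_cpow_eq_rpow_re_of_pos hx.1,
    norm_cpow_eq_rpow_re_of_pos hx', sub_re, sub_re, ofReal_re]
  exact mul_le_of_le_one_right (Real.rpow_nonneg hx.1.le _)
    (Real.rpow_le_one hx'.le (by linarith [hx.1]) (by linarith))

lemma norm_Gamma_div_Gamma_add_le (hh : 0 < h.re) (hz : 1 ≤ z.re) :
    ‖Gamma z / Gamma (z + h)‖ ≤ (h.re * ‖Gamma h‖)⁻¹ := by
  have hΓ : Gamma h ≠ 0 := Gamma_ne_zero_of_re_pos hh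
  have hratio : Gamma z / Gamma (z + h) = betaIntegral h z / Gamma h := by
    rw [betaIntegral_eq_Gamma_mul_div h z hh (by linarith), add_comm h z]
    field_simp
  rw [hratio, norm_div, div_eq_mul_inv, mul_inv]
  gcongr
  exact norm_betaIntegral_le_inv_re hh hz

lemma Gamma_div_Gamma_add_eq_mul_succ (h : ℂ) (hz : z ≠ 0) :
    Gamma z / Gamma (z + h) = (1 + h / z) * (Gamma (z + 1) / Gamma (z + 1 + h)) := by
  rw [div_eq_mul_inv, one_div_Gamma_eq_self_mul_one_div_Gamma_add_one (z + h),
    Gamma_add_one z hz, add_right_comm z 1 h]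
  field_simp

lemma norm_Gamma_div_Gamma_add_le_pow_mul (hε : 0 < ε) (hh : 0 < h.re) (N : ℕ)
    (hzε : ∀ l : ℕ, ε ≤ ‖z + l‖) (hz : 1 ≤ z.re + N) :
    ‖Gamma z / Gamma (z + h)‖ ≤ (1 + ‖h‖ / ε) ^ N * (h.re * ‖Gamma h‖)⁻¹ := by
  induction N generalizing z with
  | zero => simpa using norm_Gamma_div_Gamma_add_le hh (by simpa using hz)
  | succ N ih =>
    have hz_norm : ε ≤ ‖z‖ := by simpa using hzε 0
    have hz_succ := ih (z := z + 1)
      (fun l => by simpa [add_assoc, add_comm, add_left_comm] using hzε (l + 1))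
      (by push_cast at hz; rw [add_re, one_re]; linarith)
    have hfactor : ‖1 + h / z‖ ≤ 1 + ‖h‖ / ε := by
      refine (norm_add_le _ _).trans ?_
      rw [norm_one, norm_div]
      gcongr
    rw [Gamma_div_Gamma_add_eq_mul_succ h (norm_pos_iff.1 (hε.trans_le hz_norm)), norm_mul,
      pow_succ', mul_assoc]
    gcongr

lemma exists_norm_Gamma_div_Gamma_add_le_exp (hε : 0 < ε) (hh : 0 < h.re) :
    ∃ C : ℝ, 0 ≤ C ∧ ∀ (z : ℂ) (r : ℝ), 0 ≤ r → (∀ l : ℕ, ε ≤ ‖z + l‖) → -r ≤ z.re →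
      ‖Gamma z / Gamma (z + h)‖ ≤ Real.exp (C * (1 + r)) := by
  set K : ℝ := (h.re * ‖Gamma h‖)⁻¹
  refine ⟨2 * (‖h‖ / ε) + K, by positivity, fun z r hr hzε hzr => ?_⟩
  set N : ℕ := ⌈1 + r⌉₊
  have hN : (N : ℝ) ≤ 2 * (1 + r) := by
    linarith [(Nat.ceil_lt_add_one (by positivity : 0 ≤ 1 + r)).le]
  have hz : 1 ≤ z.re + N := by linarith [Nat.le_ceil (1 + r)]
  have hpow : (1 + ‖h‖ / ε) ^ N ≤ Real.exp (2 * (‖h‖ / ε) * (1 + r)) :=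
    calc (1 + ‖h‖ / ε) ^ N ≤ Real.exp (‖h‖ / ε) ^ N := by
          gcongr
          linarith [Real.add_one_le_exp (‖h‖ / ε)]
      _ = Real.exp (N * (‖h‖ / ε)) := (Real.exp_nat_mul _ _).symm
      _ ≤ Real.exp (2 * (1 + r) * (‖h‖ / ε)) := by gcongr
      _ = _ := by ring_nf
  have hK : K ≤ Real.exp (K * (1 + r)) := by
    have hK_nonneg : 0 ≤ K := by positivity
    linarith [Real.add_one_le_exp (K * (1 + r)), mul_nonneg hK_nonneg hr]
  calc ‖Gamma z / Gamma (z + h)‖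
      ≤ (1 + ‖h‖ / ε) ^ N * K := norm_Gamma_div_Gamma_add_le_pow_mul hε hh N hzε hz
    _ ≤ Real.exp (2 * (‖h‖ / ε) * (1 + r)) * Real.exp (K * (1 + r)) := by gcongr
    _ = _ := by rw [← Real.exp_add, ← add_mul]

lemma inv_Gamma_eq_prod_mul_inv_Gamma_add (w : ℂ) (N : ℕ) :
    (Gamma w)⁻¹ = (∏ k ∈ range N, (w + k)) * (Gamma (w + N))⁻¹ := by
  induction N with
  | zero => simp
  | succ N ih =>
    rw [ih, prod_range_succ, one_div_Gamma_eq_self_mul_one_div_Gamma_add_one (w + N), mul_assoc,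
      Nat.cast_succ, add_assoc w]

lemma norm_inv_Gamma_sub_natCast_le (w : ℂ) (p : ℕ) :
    ‖(Gamma (w - p))⁻¹‖ ≤ (‖w‖ + p) ^ p * ‖(Gamma w)⁻¹‖ := by
  have hfactor : ∀ k ∈ range p, ‖w - p + k‖ ≤ ‖w‖ + p := fun k hk => by
    have hkp : k ≤ p := (mem_range.1 hk).le
    calc ‖w - p + k‖ = ‖w - (p - k : ℕ)‖ := by rw [Nat.cast_sub hkp, sub_add]
      _ ≤ ‖w‖ + (p - k : ℕ) := by simpa using norm_sub_le w ((p - k : ℕ) : ℂ)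
      _ ≤ ‖w‖ + p := by gcongr; exact Nat.sub_le p k
  rw [inv_Gamma_eq_prod_mul_inv_Gamma_add (w - p) p, sub_add_cancel, norm_mul, norm_prod]
  gcongr
  calc ∏ k ∈ range p, ‖w - p + k‖ ≤ ∏ _k ∈ range p, (‖w‖ + p) :=
        prod_le_prod (fun _ _ => norm_nonneg _) hfactor
    _ = (‖w‖ + p) ^ p := by rw [prod_const, card_range]

lemma prod_range_add_one_add_le_four_pow_mul_factorial (j : ℕ) :
    ∏ i ∈ range j, (j + 1 + i) ≤ 4 ^ j * j ! := by
  rw [← Nat.ascFactorial_eq_prod_range, Nat.ascFactorial_eq_factorial_mul_choose, mul_comm,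
    ← two_mul]
  gcongr
  exact Nat.centralBinom_le_four_pow j

lemma prod_range_add_le_four_pow_mul_factorial_mul_exp {r : ℝ} (hr : 0 ≤ r) (j : ℕ) :
    ∏ i ∈ range j, (r + j + i) ≤ 4 ^ j * j ! * Real.exp r := by
  have hterm : ∀ i ∈ range j, r + j + i ≤ ((j + 1 + i : ℕ) : ℝ) * Real.exp (r / j) := fun i hi => by
    have hj : (0 : ℝ) < j := by exact_mod_cast (Nat.zero_le i).trans_lt (mem_range.1 hi)
    have hcross : 0 ≤ (1 + i) * (r / j) := by positivity
    have hr_eq : (j : ℝ) * (r / j) = r := mul_div_cancel₀ r hj.ne'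
    calc r + j + i ≤ ((j + 1 + i : ℕ) : ℝ) * (r / j + 1) := by
          push_cast
          linarith
      _ ≤ _ := by gcongr; exact Real.add_one_le_exp _
  have hexp : Real.exp (r / j) ^ j ≤ Real.exp r := by
    rw [← Real.exp_nat_mul, Real.exp_le_exp, mul_div_left_comm]
    exact mul_le_of_le_one_right hr (div_self_le_one _)
  calc ∏ i ∈ range j, (r + j + i)
      ≤ ∏ i ∈ range j, ((j + 1 + i : ℕ) : ℝ) * Real.exp (r / j) :=
        prod_le_prod (fun i _ => by positivity) hterm
    _ = ((∏ i ∈ range j, (j + 1 + i) : ℕ) : ℝ) * Real.exp (r / j) ^ j := by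
        rw [prod_mul_distrib, prod_const, card_range, Nat.cast_prod]
    _ ≤ ((4 ^ j * j ! : ℕ) : ℝ) * Real.exp r := by
        gcongr
        exact prod_range_add_one_add_le_four_pow_mul_factorial j
    _ = _ := by push_cast; rfl

lemma norm_inv_Gamma_add_natCast_le (u : ℂ) (j : ℕ) :
    ‖(Gamma (u + j))⁻¹‖ ≤ 4 ^ j * j ! * Real.exp ‖u‖ * ‖(Gamma (u + 2 * j))⁻¹‖ := by
  rw [inv_Gamma_eq_prod_mul_inv_Gamma_add (u + j) j, add_assoc u, ← two_mul, norm_mul, norm_prod]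
  gcongr
  refine le_trans (prod_le_prod (fun _ _ => norm_nonneg _) fun i _ => ?_)
    (prod_range_add_le_four_pow_mul_factorial_mul_exp (norm_nonneg u) j)
  simpa using norm_add₃_le (a := u) (b := (j : ℂ)) (c := (i : ℂ))

lemma norm_inv_Gamma_add_natCast_sub_natCast_le (u : ℂ) (p j : ℕ) :
    ‖(Gamma (u + j - p))⁻¹‖ ≤
      4 ^ j * j ! * Real.exp ((p + 1) * (‖u‖ + p)) * (1 + j) ^ p * ‖(Gamma (u + 2 * j))⁻¹‖ := by
  have hbase : ‖u + j‖ + p ≤ Real.exp (‖u‖ + p) * (1 + j) := by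
    have hnorm : ‖u + j‖ ≤ ‖u‖ + j := by simpa using norm_add_le u (j : ℂ)
    have hcross : 0 ≤ (‖u‖ + p) * j := by positivity
    calc ‖u + j‖ + p ≤ (‖u‖ + p + 1) * (1 + j) := by linarith
      _ ≤ _ := by gcongr; exact Real.add_one_le_exp _
  calc ‖(Gamma (u + j - p))⁻¹‖
      ≤ (‖u + j‖ + p) ^ p * ‖(Gamma (u + j))⁻¹‖ := norm_inv_Gamma_sub_natCast_le (u + j) p
    _ ≤ (Real.exp (‖u‖ + p) * (1 + j)) ^ p *
          (4 ^ j * j ! * Real.exp (‖u‖ + p) * ‖(Gamma (u + 2 * j))⁻¹‖) := by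
        gcongr
        refine (norm_inv_Gamma_add_natCast_le u j).trans ?_
        gcongr
        exact le_add_of_nonneg_right p.cast_nonneg
    _ = _ := by
        rw [mul_pow, ← Real.exp_nat_mul, add_one_mul, Real.exp_add (p * _)]
        ring

lemma norm_two_zpow_mul_Gamma_div_le (s h : ℂ) (p j : ℕ) :
    ‖(2 : ℂ) ^ (-(2 * (j : ℤ))) * Gamma (s + 2 * j) /
        (Gamma (s + h + j - p) * Gamma (j + 1))‖ ≤
      Real.exp ((p + 1) * (‖s + h‖ + p)) * (1 + j) ^ p *
        ‖Gamma (s + 2 * j) / Gamma (s + 2 * j + h)‖ := by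
  have hpow : ‖(2 : ℂ) ^ (-(2 * (j : ℤ)))‖ = (4 ^ j)⁻¹ := by
    rw [zpow_neg, zpow_mul, zpow_natCast]
    norm_num
  have hfactorial : ‖Gamma ((j : ℂ) + 1)‖ = j ! := by rw [Gamma_nat_eq_factorial, norm_natCast]
  calc ‖(2 : ℂ) ^ (-(2 * (j : ℤ))) * Gamma (s + 2 * j) / (Gamma (s + h + j - p) * Gamma (j + 1))‖
      = (4 ^ j * j ! : ℝ)⁻¹ * ‖Gamma (s + 2 * j)‖ * ‖(Gamma (s + h + j - p))⁻¹‖ := by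
        rw [norm_div, norm_mul, norm_mul, hpow, hfactorial, norm_inv]
        ring
    _ ≤ (4 ^ j * j ! : ℝ)⁻¹ * ‖Gamma (s + 2 * j)‖ *
          (4 ^ j * j ! * Real.exp ((p + 1) * (‖s + h‖ + p)) * (1 + j) ^ p *
            ‖(Gamma (s + h + 2 * j))⁻¹‖) := by
        gcongr
        exact norm_inv_Gamma_add_natCast_sub_natCast_le (s + h) p j
    _ = _ := by
        rw [add_right_comm s h, div_eq_mul_inv (Gamma _), norm_mul]
        field_simp

end GammaBounds

/-- At a pole of `Γ(s - a + 1 + j)` the division by zero gives `0`, which is also the value there of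
the entire function `1 / Γ`. -/
theorem stmt_16_general (a : ℂ) {ε : ℝ} (hε : 0 < ε) :
    ∃ C : ℝ, 0 < C ∧ ∀ s : ℂ, (∀ l : ℕ, ε ≤ ‖s + l‖) → ∀ j : ℕ,
      ‖(2 : ℂ) ^ (-(2 * (j : ℤ))) * Complex.Gamma (s + 2 * j) /
          (Complex.Gamma (s - a + 1 + j) * Complex.Gamma ((j : ℂ) + 1))‖ ≤
        Real.exp (C * (1 + ‖s‖)) * (1 + (j : ℝ)) ^ ⌊a.re⌋₊ := by
  set p : ℕ := ⌊a.re⌋₊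
  set h : ℂ := p + 1 - a with h_def
  have hh : 0 < h.re := by simpa [h_def] using Nat.lt_floor_add_one a.re
  obtain ⟨C, hC, hratio⟩ := exists_norm_Gamma_div_Gamma_add_le_exp hε hh
  refine ⟨(p + 1) * (1 + ‖h‖ + p) + C, by positivity, fun s hs j => ?_⟩
  have hshift : s - a + 1 + j = s + h + j - p := by rw [h_def]; ring
  have hexponent : (p + 1) * (‖s + h‖ + p) ≤ (p + 1) * (1 + ‖h‖ + p) * (1 + ‖s‖) := by
    have hcross : 0 ≤ (‖h‖ + p) * ‖s‖ := by positivity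
    rw [mul_assoc]
    gcongr
    linarith [norm_add_le s h]
  have hpoles : ∀ l : ℕ, ε ≤ ‖s + 2 * j + l‖ := fun l => by
    simpa [add_assoc] using hs (2 * j + l)
  have hre : -‖s‖ ≤ (s + 2 * j).re := by
    have hre_eq : (s + 2 * j).re = s.re + 2 * j := by simp
    linarith [neg_le_of_abs_le (Complex.abs_re_le_norm s), j.cast_nonneg (α := ℝ)]
  rw [hshift]
  calc _ ≤ Real.exp ((p + 1) * (‖s + h‖ + p)) * (1 + j) ^ p *
          ‖Complex.Gamma (s + 2 * j) / Complex.Gamma (s + 2 * j + h)‖ :=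
        norm_two_zpow_mul_Gamma_div_le s h p j
    _ ≤ Real.exp ((p + 1) * (1 + ‖h‖ + p) * (1 + ‖s‖)) * (1 + j) ^ p *
          Real.exp (C * (1 + ‖s‖)) := by
        gcongr
        exact hratio _ _ (norm_nonneg s) hpoles hre
    _ = _ := by rw [mul_right_comm, ← Real.exp_add, ← add_mul]

lemma le_norm_add_natCast_of_lt_infDist_polesSet {n : ℕ} {ε : ℝ} {s : ℂ}
    (hs : ε < Metric.infDist s (polesSet n)) (l : ℕ) : ε ≤ ‖s + l‖ := by
  have hl : -(l : ℂ) ∈ polesSet n := Or.inr ⟨l, rfl⟩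
  simpa [dist_eq_norm] using hs.le.trans (Metric.infDist_le_dist_of_mem hl)

theorem stmt_16 (n : ℕ) (ε : ℝ) (hε : 0 < ε) :
    ∃ C : ℝ, 0 < C ∧ ∃ m : ℕ, ∀ s : ℂ, ε < Metric.infDist s (polesSet n) →
      ∀ j : ℕ,
        ‖(2 : ℂ) ^ (-(2 * (j : ℤ))) * Complex.Gamma (s + 2 * j) /
            (Complex.Gamma (s - n / 2 + 1 + j) * Complex.Gamma ((j : ℂ) + 1))‖ ≤
          Real.exp (C * (1 + ‖s‖)) * (1 + (j : ℝ)) ^ m := by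
  obtain ⟨C, hC, hbound⟩ := stmt_16_general (n / 2) hε
  exact ⟨C, hC, _, fun s hs => hbound s (le_norm_add_natCast_of_lt_infDist_polesSet hs)⟩
end

section
/- There exists a constant C > 0 such that for every z ∈ ℂ with Re z ≤ 0 and z ∉ −ℕ₀, one has |Γ(z)| ≤ C · |z|^{Re z − 1/2} · e^{−Re z} · e^{−π|Im z| − (Im z)·arg(−z)} · (1 + dist(z, −ℕ₀)^{−1}), where arg denotes the principal argument with values in (−π, π]. -/
/-!
Write `L s = (s - 1/2) log s - s`. The defect `L (s + 1) - L s - log s` equals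
`∫₀¹ (1/2 - t)² / ((s + 1/2) (s + t)) dt`, so on `0 < Re s` it is bounded by a telescoping
quantity, and inserting this into Euler's limit for `Γ` gives Stirling's formula for `log |Γ s|`
with an explicit error. Stirling's formula at `1 - z` bounds `|Γ (1 - z)|` from below, the distance
of `z` to the nearest integer bounds `|sin (π z)|` from below, and the reflection formula combines
the two bounds.
-/

open Filter Topology

section Stirling

/-- The main term `(s - 1/2) log s - s` of Stirling's formula for `log Γ(s)`, without the constant
`log (2π) / 2`. -/
noncomputable def stirlingLog (s : ℂ) : ℂ := (s - 1 / 2) * Complex.log s - s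

theorem add_ofReal_mem_slitPlane {s : ℂ} (hs : s ∈ Complex.slitPlane) {t : ℝ} (ht : 0 ≤ t) :
    s + t ∈ Complex.slitPlane := by
  rw [Complex.mem_slitPlane_iff] at hs ⊢
  refine hs.imp (fun hre => ?_) (fun him => ?_)
  · simpa using add_pos_of_pos_of_nonneg hre ht
  · simpa using him

theorem continuousOn_inv_add_ofReal {s : ℂ} (hs : s ∈ Complex.slitPlane) :
    ContinuousOn (fun t : ℝ => (s + t)⁻¹) (Set.uIcc 0 1) := by
  refine ContinuousOn.inv₀ (by fun_prop) fun t ht => ?_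
  rw [Set.uIcc_of_le zero_le_one] at ht
  exact Complex.slitPlane_ne_zero (add_ofReal_mem_slitPlane hs ht.1)

theorem integral_inv_add_ofReal {s : ℂ} (hs : s ∈ Complex.slitPlane) :
    ∫ t in (0 : ℝ)..1, (s + t)⁻¹ = Complex.log (s + 1) - Complex.log s := by
  have hderiv : ∀ t ∈ Set.uIcc (0 : ℝ) 1,
      HasDerivAt (fun t : ℝ => Complex.log (s + t)) (s + t)⁻¹ t := fun t ht => by
    rw [Set.uIcc_of_le zero_le_one] at ht
    simpa using (((hasDerivAt_id t).ofReal_comp).const_add s).clog_real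
      (add_ofReal_mem_slitPlane hs ht.1)
  simpa using intervalIntegral.integral_eq_sub_of_hasDerivAt hderiv
    (continuousOn_inv_add_ofReal hs).intervalIntegrable

theorem stirlingLog_add_one_sub_sub_log {s : ℂ} (hs : 0 < s.re) :
    stirlingLog (s + 1) - stirlingLog s - Complex.log s =
      ∫ t in (0 : ℝ)..1, (1 / 2 - t : ℂ) ^ 2 / ((s + 1 / 2) * (s + t)) := by
  have hslit : s ∈ Complex.slitPlane := Or.inl hs
  have hhalf : s + 1 / 2 ≠ 0 := by
    simpa using Complex.slitPlane_ne_zero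
      (add_ofReal_mem_slitPlane hslit (t := 1 / 2) (by norm_num))
  have hsplit : ∀ t ∈ Set.uIcc (0 : ℝ) 1, (1 / 2 - t : ℂ) ^ 2 / ((s + 1 / 2) * (s + t)) =
      (s + 1 / 2) * (s + t)⁻¹ - (1 + (1 / 2 - t) / (s + 1 / 2)) := fun t ht => by
    rw [Set.uIcc_of_le zero_le_one] at ht
    have hst := Complex.slitPlane_ne_zero (add_ofReal_mem_slitPlane hslit ht.1)
    rw [show (1 / 2 - t : ℂ) = (s + 1 / 2) - (s + t) by ring]
    generalize s + 1 / 2 = c at hhalf ⊢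
    field_simp
    ring
  have hmean : ∫ t in (0 : ℝ)..1, (1 + (1 / 2 - t) / (s + 1 / 2) : ℂ) = 1 := by
    have hid : ∫ t in (0 : ℝ)..1, (t : ℂ) = 1 / 2 := by
      rw [intervalIntegral.integral_ofReal, integral_id]
      norm_num
    rw [intervalIntegral.integral_add (by simp)
      (by apply Continuous.intervalIntegrable; fun_prop), intervalIntegral.integral_div,
      intervalIntegral.integral_sub (by simp)
      (by apply Continuous.intervalIntegrable; fun_prop), hid]
    simp
  rw [intervalIntegral.integral_congr hsplit, intervalIntegral.integral_sub
    ((continuousOn_inv_add_ofReal hslit).intervalIntegrable.const_mul _)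
    (by apply Continuous.intervalIntegrable; fun_prop), hmean,
    intervalIntegral.integral_const_mul, integral_inv_add_ofReal hslit]
  simp only [stirlingLog]
  ring

theorem norm_stirlingLog_add_one_sub_sub_log_le {s : ℂ} (hs : 0 < s.re) :
    ‖stirlingLog (s + 1) - stirlingLog s - Complex.log s‖ ≤
      1 / (2 * s.re) - 1 / (2 * (s.re + 1)) := by
  have hbound : ∀ t ∈ Set.uIoc (0 : ℝ) 1, ‖(1 / 2 - t : ℂ) ^ 2 / ((s + 1 / 2) * (s + t))‖ ≤
      (1 / 2) ^ 2 / ((s.re + 1 / 2) * s.re) := fun t ht => by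
    rw [Set.uIoc_of_le zero_le_one] at ht
    have hnum : ‖(1 / 2 - t : ℂ)‖ ≤ 1 / 2 := by
      have : (1 / 2 - t : ℂ) = ((1 / 2 - t : ℝ) : ℂ) := by push_cast; rfl
      rw [this, Complex.norm_real, Real.norm_eq_abs, abs_le]
      constructor <;> linarith [ht.1, ht.2]
    have hhalf : s.re + 1 / 2 ≤ ‖s + 1 / 2‖ := by
      simpa using Complex.re_le_norm (s + 1 / 2)
    have ht' : s.re ≤ ‖s + t‖ := by
      have := Complex.re_le_norm (s + t)
      simp only [Complex.add_re, Complex.ofReal_re] at this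
      linarith [ht.1]
    rw [norm_div, norm_pow, norm_mul]
    gcongr
  rw [stirlingLog_add_one_sub_sub_log hs]
  calc _ ≤ (1 / 2) ^ 2 / ((s.re + 1 / 2) * s.re) := by
        simpa using intervalIntegral.norm_integral_le_of_norm_le_const hbound
    _ ≤ 1 / (2 * s.re * (s.re + 1)) := by
        rw [div_le_div_iff₀ (by positivity) (by positivity)]
        nlinarith
    _ = _ := by
        field_simp
        ring

theorem norm_stirlingLog_add_natCast_sub_sum_log_le {s : ℂ} (hs : 0 < s.re) (n : ℕ) :
    ‖stirlingLog (s + n) - stirlingLog s - ∑ j ∈ Finset.range n, Complex.log (s + j)‖ ≤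
      1 / (2 * s.re) := by
  have hre (j : ℕ) : (s + j).re = s.re + j := by simp
  have hpos (j : ℕ) : 0 < s.re + j := by positivity
  have htel : stirlingLog (s + n) - stirlingLog s =
      ∑ j ∈ Finset.range n, (stirlingLog (s + j + 1) - stirlingLog (s + j)) := by
    simpa [add_assoc] using (Finset.sum_range_sub (fun j : ℕ => stirlingLog (s + j)) n).symm
  rw [htel, ← Finset.sum_sub_distrib]
  calc _ ≤ ∑ j ∈ Finset.range n,
        (1 / (2 * (s.re + j)) - 1 / (2 * (s.re + (j + 1 : ℕ)))) := by
        refine norm_sum_le_of_le _ fun j _ => ?_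
        simpa only [hre, Nat.cast_succ, add_assoc] using
          norm_stirlingLog_add_one_sub_sub_log_le (s := s + j) (by rw [hre]; exact hpos j)
    _ = 1 / (2 * s.re) - 1 / (2 * (s.re + n)) := by
        simpa using Finset.sum_range_sub' (fun j : ℕ => 1 / (2 * (s.re + j))) n
    _ ≤ 1 / (2 * s.re) := sub_le_self _ (by have := hpos n; positivity)

theorem tendsto_natCast_add_mul_log_one_add_div (a b : ℂ) :
    Tendsto (fun n : ℕ => (n + a) * Complex.log (1 + b / n)) atTop (𝓝 b) := by
  have hlin : Tendsto (fun n : ℕ => (n : ℂ) * Complex.log (1 + b / n)) atTop (𝓝 b) := by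
    have hquot : Tendsto (fun x : ℝ => (x : ℂ) * (b / x)) atTop (𝓝 b) := by
      refine tendsto_const_nhds.congr' ?_
      filter_upwards [eventually_ne_atTop 0] with x hx
      rw [mul_div_cancel₀ _ (by exact_mod_cast hx)]
    simpa [Function.comp_def] using
      (Complex.tendsto_mul_log_one_add_of_tendsto hquot).comp tendsto_natCast_atTop_atTop
  have hlog : Tendsto (fun n : ℕ => Complex.log (1 + b / n)) atTop (𝓝 0) := by
    have h := (tendsto_const_div_atTop_nhds_zero_nat b).const_add 1
    rw [add_zero] at h
    simpa using h.clog (by simp)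
  simpa [add_mul] using hlin.add (hlog.const_mul a)

theorem tendsto_stirlingLog_natCast_add_sub (a : ℂ) :
    Tendsto (fun n : ℕ => stirlingLog (n + a) - ((n + a - 1 / 2) * Real.log n - n)) atTop
      (𝓝 0) := by
  have h := (tendsto_natCast_add_mul_log_one_add_div (a - 1 / 2) a).sub_const a
  rw [sub_self] at h
  have hne : ∀ᶠ n : ℕ in atTop, 1 + a / n ≠ 0 := by
    have h := (tendsto_const_div_atTop_nhds_zero_nat a).const_add 1
    exact h.eventually_ne (by simp)
  refine h.congr' ?_
  filter_upwards [eventually_gt_atTop 0, hne] with n hn hne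
  have hn0 : (n : ℂ) ≠ 0 := by exact_mod_cast hn.ne'
  have hfactor : (n + a : ℂ) = (n : ℝ) * (1 + a / n) := by
    push_cast
    field_simp
  have hlog : Complex.log (n + a) = Real.log n + Complex.log (1 + a / n) := by
    rw [hfactor, Complex.log_ofReal_mul (by exact_mod_cast hn) hne]
  rw [stirlingLog, hlog]
  ring

theorem tendsto_log_factorial_sub :
    Tendsto (fun n : ℕ => Real.log n.factorial - ((n + 1 / 2) * Real.log n - n)) atTop
      (𝓝 (Real.log (2 * Real.pi) / 2)) := by
  have h := (Stirling.tendsto_stirlingSeq_sqrt_pi.log (by positivity)).add_const (Real.log 2 / 2)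
  have hlim : Real.log √Real.pi + Real.log 2 / 2 = Real.log (2 * Real.pi) / 2 := by
    rw [Real.log_sqrt Real.pi_nonneg, Real.log_mul two_ne_zero Real.pi_ne_zero]
    ring
  rw [hlim] at h
  refine h.congr' ?_
  filter_upwards [eventually_ne_atTop 0] with n hn
  have hn0 : (n : ℝ) ≠ 0 := by exact_mod_cast hn
  rw [Stirling.log_stirlingSeq_formula, Real.log_mul two_ne_zero hn0,
    Real.log_div hn0 (Real.exp_ne_zero 1), Real.log_exp]
  ring

theorem tendsto_mul_log_add_log_factorial_sub_stirlingLog (s : ℂ) :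
    Tendsto (fun n : ℕ => s * Real.log n + Real.log n.factorial - stirlingLog (s + (n + 1 : ℕ)))
      atTop (𝓝 (Real.log (2 * Real.pi) / 2 : ℝ)) := by
  have h := (tendsto_log_factorial_sub.ofReal).sub (tendsto_stirlingLog_natCast_add_sub (s + 1))
  rw [sub_zero] at h
  refine h.congr fun n => ?_
  have hshift : s + (n + 1 : ℕ) = n + (s + 1) := by
    push_cast
    ring
  rw [hshift]
  push_cast
  ring

theorem log_norm_GammaSeq {s : ℂ} (hs : 0 < s.re) {n : ℕ} (hn : n ≠ 0) :
    Real.log ‖Complex.GammaSeq s n‖ =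
      (s * Real.log n + Real.log n.factorial
        - ∑ j ∈ Finset.range (n + 1), Complex.log (s + j)).re := by
  have hne (j : ℕ) : s + j ≠ 0 :=
    Complex.slitPlane_ne_zero (add_ofReal_mem_slitPlane (Or.inl hs) j.cast_nonneg)
  have hfac : (n.factorial : ℂ) ≠ 0 := by exact_mod_cast n.factorial_ne_zero
  have hexp : Complex.GammaSeq s n =
      Complex.exp (s * Real.log n + Real.log n.factorial
        - ∑ j ∈ Finset.range (n + 1), Complex.log (s + j)) := by
    rw [Complex.exp_sub, Complex.exp_add, Complex.exp_sum, Complex.GammaSeq,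
      Complex.cpow_def_of_ne_zero (by exact_mod_cast hn), Complex.natCast_log,
      Complex.natCast_log, Complex.exp_log hfac, mul_comm s]
    simp only [Complex.exp_log (hne _)]
  rw [hexp, Complex.norm_exp, Real.log_exp]

theorem abs_log_norm_Gamma_sub_stirlingLog_le {s : ℂ} (hs : 0 < s.re) :
    |Real.log ‖Complex.Gamma s‖ - (stirlingLog s).re - Real.log (2 * Real.pi) / 2| ≤
      1 / (2 * s.re) := by
  have hGamma : Tendsto (fun n => Real.log ‖Complex.GammaSeq s n‖) atTop
      (𝓝 (Real.log ‖Complex.Gamma s‖)) :=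
    (Complex.GammaSeq_tendsto_Gamma s).norm.log
      (norm_ne_zero_iff.2 (Complex.Gamma_ne_zero_of_re_pos hs))
  have hconst := (Complex.continuous_re.tendsto _).comp
    (tendsto_mul_log_add_log_factorial_sub_stirlingLog s)
  refine le_of_tendsto ((hGamma.sub_const _).sub hconst).abs ?_
  filter_upwards [eventually_ne_atTop 0] with n hn
  rw [log_norm_GammaSeq hs hn, Function.comp_apply, ← Complex.sub_re, ← Complex.sub_re]
  refine (Complex.abs_re_le_norm _).trans ?_
  refine (congrArg norm ?_).trans_le (norm_stirlingLog_add_natCast_sub_sum_log_le hs (n + 1))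
  ring

theorem mem_slitPlane_of_re_nonneg {w : ℂ} (hw : 0 ≤ w.re) (h0 : w ≠ 0) :
    w ∈ Complex.slitPlane := by
  rw [Complex.mem_slitPlane_iff]
  by_contra! h
  exact h0 (Complex.ext (le_antisymm h.1 hw) h.2)

theorem re_add_half_mul_log_le {w : ℂ} (hw : 0 ≤ w.re) (h0 : w ≠ 0) :
    ((w + 1 / 2) * Complex.log w).re ≤ ((w + 1 / 2) * Complex.log (w + 1)).re := by
  have hslit := mem_slitPlane_of_re_nonneg hw h0
  have hint : ((w + 1 / 2) * Complex.log (w + 1)).re - ((w + 1 / 2) * Complex.log w).re =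
      ∫ t in (0 : ℝ)..1, ((w + 1 / 2) * (w + t)⁻¹).re := by
    rw [← Complex.sub_re, ← mul_sub, ← integral_inv_add_ofReal hslit,
      ← intervalIntegral.integral_const_mul]
    exact (Complex.reCLM.intervalIntegral_comp_comm
      ((continuousOn_inv_add_ofReal hslit).intervalIntegrable.const_mul _)).symm
  have hnonneg : ∀ t ∈ Set.Icc (0 : ℝ) 1, 0 ≤ ((w + 1 / 2) * (w + t)⁻¹).re := fun t ht => by
    rw [← div_eq_mul_inv, Complex.div_re, ← add_div]
    refine div_nonneg ?_ (Complex.normSq_nonneg _)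
    have hre : 0 ≤ (w.re + 1 / 2) * (w.re + t) :=
      mul_nonneg (by positivity) (add_nonneg hw ht.1)
    simpa using add_nonneg hre (mul_self_nonneg w.im)
  rw [← sub_nonneg, hint]
  exact intervalIntegral.integral_nonneg zero_le_one hnonneg

theorem norm_rpow_mul_exp_le_norm_Gamma_one_add {w : ℂ} (hw : 0 ≤ w.re) (h0 : w ≠ 0) :
    ‖w‖ ^ (w.re + 1 / 2) * Real.exp (-w.re) * Real.exp (-(w.im * w.arg)) * Real.exp (-(3 / 2)) ≤
      ‖Complex.Gamma (1 + w)‖ := by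
  have hre : (1 + w).re = 1 + w.re := by simp
  have hpos : 0 < (1 + w).re := by rw [hre]; positivity
  have hstirling := (abs_le.1 (abs_log_norm_Gamma_sub_stirlingLog_le hpos)).1
  have herror : 1 / (2 * (1 + w).re) ≤ 1 / 2 := by
    rw [hre]
    gcongr
    linarith
  have hmain : (stirlingLog (1 + w)).re =
      ((w + 1 / 2) * Complex.log (w + 1)).re - w.re - 1 := by
    rw [stirlingLog, Complex.sub_re, hre, add_comm 1 w, show w + 1 - 1 / 2 = w + 1 / 2 by ring]
    ring
  have hmono := re_add_half_mul_log_le hw h0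
  have hexpand : ((w + 1 / 2) * Complex.log w).re =
      Real.log ‖w‖ * (w.re + 1 / 2) - w.im * w.arg := by
    have hhalf : (w + 1 / 2).re = w.re + 1 / 2 ∧ (w + 1 / 2).im = w.im := by simp
    rw [Complex.mul_re, Complex.log_re, Complex.log_im, hhalf.1, hhalf.2, mul_comm]
  have hlog : 0 ≤ Real.log (2 * Real.pi) := Real.log_nonneg (by linarith [Real.pi_gt_three])
  rw [Real.rpow_def_of_pos (norm_pos_iff.2 h0), ← Real.exp_add, ← Real.exp_add, ← Real.exp_add,
    ← Real.le_log_iff_exp_le (norm_pos_iff.2 (Complex.Gamma_ne_zero_of_re_pos hpos))]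
  linarith

end Stirling

section Sine

theorem norm_sin_sq (z : ℂ) :
    ‖Complex.sin z‖ ^ 2 = Real.sin z.re ^ 2 + Real.sinh z.im ^ 2 := by
  have hsin : Complex.sin z = ((Real.sin z.re * Real.cosh z.im : ℝ) : ℂ)
      + ((Real.cos z.re * Real.sinh z.im : ℝ) : ℂ) * Complex.I := by
    rw [Complex.sin_eq]
    push_cast
    rfl
  rw [hsin, Complex.sq_norm, Complex.normSq_add_mul_I]
  linear_combination Real.sin z.re ^ 2 * Real.cosh_sq z.im
    + Real.sinh z.im ^ 2 * Real.sin_sq_add_cos_sq z.re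

theorem abs_sin_re_le_norm_sin (z : ℂ) : |Real.sin z.re| ≤ ‖Complex.sin z‖ := by
  rw [← abs_norm (Complex.sin z), ← sq_le_sq, norm_sin_sq]
  exact le_add_of_nonneg_right (sq_nonneg _)

theorem sinh_abs_im_le_norm_sin (z : ℂ) : Real.sinh |z.im| ≤ ‖Complex.sin z‖ := by
  rw [← Real.abs_sinh, ← abs_norm (Complex.sin z), ← sq_le_sq, norm_sin_sq]
  exact le_add_of_nonneg_left (sq_nonneg _)

theorem two_mul_abs_sub_round_le_abs_sin_pi_mul (x : ℝ) :
    2 * |x - round x| ≤ |Real.sin (Real.pi * x)| := by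
  have hperiod : |Real.sin (Real.pi * (x - round x))| = |Real.sin (Real.pi * x)| := by
    rw [mul_sub, mul_comm Real.pi (round x : ℝ), Real.sin_sub_int_mul_pi]
    simp [abs_mul]
  have hsmall : |Real.pi * (x - round x)| ≤ Real.pi / 2 := by
    rw [abs_mul, abs_of_pos Real.pi_pos]
    nlinarith [abs_sub_round x, Real.pi_pos]
  calc 2 * |x - round x| = 2 / Real.pi * |Real.pi * (x - round x)| := by
        rw [abs_mul, abs_of_pos Real.pi_pos]
        field_simp
    _ ≤ _ := hperiod ▸ Real.mul_abs_le_abs_sin hsmall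

theorem exp_abs_im_sub_exp_neg_abs_im_le_norm_sin (z : ℂ) :
    Real.exp |z.im| - Real.exp (-|z.im|) ≤ 2 * ‖Complex.sin z‖ := by
  have h := sinh_abs_im_le_norm_sin z
  rw [Real.sinh_eq] at h
  linarith

theorem exp_abs_im_mul_abs_im_le_norm_sin (z : ℂ) :
    Real.exp |z.im| * |z.im| ≤ 2 * ‖Complex.sin z‖ * (1 + |z.im|) := by
  have hb : 0 ≤ |z.im| := abs_nonneg _
  have hexp : Real.exp (-|z.im|) * (1 + |z.im|) ≤ Real.exp |z.im| := by
    calc _ ≤ 1 * Real.exp |z.im| := by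
          gcongr
          · simp
          · linarith [Real.add_one_le_exp |z.im|]
      _ = _ := one_mul _
  have h := mul_le_mul_of_nonneg_right (exp_abs_im_sub_exp_neg_abs_im_le_norm_sin z)
    (add_nonneg zero_le_one hb)
  linarith

theorem abs_im_pi_mul (z : ℂ) : |(Real.pi * z).im| = Real.pi * |z.im| := by
  rw [Complex.im_ofReal_mul, abs_mul, abs_of_pos Real.pi_pos]

theorem exp_mul_abs_re_sub_round_le_norm_sin_pi_mul (z : ℂ) :
    Real.exp (Real.pi * |z.im|) * |z.re - round z.re| ≤ 2 * ‖Complex.sin (Real.pi * z)‖ := by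
  have hsin : 2 * |z.re - round z.re| ≤ ‖Complex.sin (Real.pi * z)‖ := by
    refine (two_mul_abs_sub_round_le_abs_sin_pi_mul z.re).trans ?_
    simpa only [Complex.re_ofReal_mul] using abs_sin_re_le_norm_sin (Real.pi * z)
  have hexp : Real.exp (Real.pi * |z.im|) ≤ 2 * ‖Complex.sin (Real.pi * z)‖ + 1 := by
    have h := exp_abs_im_sub_exp_neg_abs_im_le_norm_sin (Real.pi * z)
    rw [abs_im_pi_mul] at h
    have hle : Real.exp (-(Real.pi * |z.im|)) ≤ 1 :=
      Real.exp_le_one_iff.2 (neg_nonpos.2 (by positivity))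
    linarith
  calc _ ≤ (2 * ‖Complex.sin (Real.pi * z)‖ + 1) * |z.re - round z.re| := by gcongr
    _ = 2 * ‖Complex.sin (Real.pi * z)‖ * |z.re - round z.re| + |z.re - round z.re| := by ring
    _ ≤ 2 * ‖Complex.sin (Real.pi * z)‖ * (1 / 2) + ‖Complex.sin (Real.pi * z)‖ / 2 := by
        gcongr
        · exact abs_sub_round z.re
        · linarith
    _ ≤ _ := by linarith [norm_nonneg (Complex.sin (Real.pi * z))]

theorem exp_mul_abs_im_le_norm_sin_pi_mul (z : ℂ) :
    Real.exp (Real.pi * |z.im|) * |z.im| ≤ 2 * ‖Complex.sin (Real.pi * z)‖ * (1 + |z.im|) := by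
  have h := exp_abs_im_mul_abs_im_le_norm_sin (Real.pi * z)
  rw [abs_im_pi_mul] at h
  refine le_of_mul_le_mul_left ?_ Real.pi_pos
  calc _ = Real.exp (Real.pi * |z.im|) * (Real.pi * |z.im|) := by ring
    _ ≤ 2 * ‖Complex.sin (Real.pi * z)‖ * (1 + Real.pi * |z.im|) := h
    _ ≤ 2 * ‖Complex.sin (Real.pi * z)‖ * (Real.pi + Real.pi * |z.im|) := by
        gcongr
        linarith [Real.pi_gt_three]
    _ = _ := by ring

theorem exp_mul_norm_sub_round_re_le_norm_sin_pi_mul (z : ℂ) :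
    Real.exp (Real.pi * |z.im|) * ‖z - round z.re‖ ≤
      4 * ‖Complex.sin (Real.pi * z)‖ * (1 + ‖z - round z.re‖) := by
  have hre : (z - round z.re).re = z.re - round z.re := by simp
  have him : (z - round z.re).im = z.im := by simp
  have hnorm := Complex.norm_le_abs_re_add_abs_im (z - round z.re)
  have him_le := Complex.abs_im_le_norm (z - round z.re)
  rw [hre, him] at hnorm
  rw [him] at him_le
  calc _ ≤ Real.exp (Real.pi * |z.im|) * (|z.re - round z.re| + |z.im|) := by gcongr
    _ ≤ 2 * ‖Complex.sin (Real.pi * z)‖ + 2 * ‖Complex.sin (Real.pi * z)‖ * (1 + |z.im|) := by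
        rw [mul_add]
        exact add_le_add (exp_mul_abs_re_sub_round_le_norm_sin_pi_mul z)
          (exp_mul_abs_im_le_norm_sin_pi_mul z)
    _ = 2 * ‖Complex.sin (Real.pi * z)‖ * (2 + |z.im|) := by ring
    _ ≤ 2 * ‖Complex.sin (Real.pi * z)‖ * (2 * (1 + ‖z - round z.re‖)) := by
        gcongr
        linarith [norm_nonneg (z - round z.re)]
    _ = _ := by ring

theorem inv_norm_sin_pi_mul_le {z : ℂ} (hz : z ≠ round z.re) :
    ‖Complex.sin (Real.pi * z)‖⁻¹ ≤
      4 * Real.exp (-(Real.pi * |z.im|)) * (1 + ‖z - round z.re‖⁻¹) := by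
  have hdist : 0 < ‖z - round z.re‖ := norm_pos_iff.2 (sub_ne_zero.2 hz)
  have h := exp_mul_norm_sub_round_re_le_norm_sin_pi_mul z
  have hsin : 0 < ‖Complex.sin (Real.pi * z)‖ := by
    refine (norm_nonneg _).lt_of_ne fun h0 => ?_
    rw [← h0, mul_zero, zero_mul] at h
    exact h.not_gt (by positivity)
  rw [inv_le_iff_one_le_mul₀ hsin, Real.exp_neg]
  calc 1 ≤ 4 * ‖Complex.sin (Real.pi * z)‖ * (1 + ‖z - round z.re‖) /
        (Real.exp (Real.pi * |z.im|) * ‖z - round z.re‖) := (one_le_div (by positivity)).2 h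
    _ = _ := by
        field_simp
        ring

end Sine

section Distance

theorem norm_sub_round_re_le (z : ℂ) (k : ℤ) : ‖z - round z.re‖ ≤ ‖z - k‖ := by
  rw [Complex.norm_def, Complex.norm_def, Complex.normSq_apply, Complex.normSq_apply]
  simpa [← sq] using Real.sqrt_le_sqrt
    (add_le_add_left (sq_le_sq.2 (round_le z.re k)) (z.im ^ 2))

theorem round_re_mem_negNat0 {z : ℂ} (hz : z.re ≤ 0) : (round z.re : ℂ) ∈ negNat0 := by
  have hlt : (round z.re : ℝ) < 1 := by linarith [round_le_add_half z.re]
  obtain ⟨m, hm⟩ := Int.exists_eq_neg_ofNat (Int.lt_add_one_iff.1 (by exact_mod_cast hlt))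
  exact ⟨m, by simp [hm]⟩

theorem infDist_negNat0 {z : ℂ} (hz : z.re ≤ 0) :
    Metric.infDist z negNat0 = ‖z - round z.re‖ := by
  have hmem := round_re_mem_negNat0 hz
  refine le_antisymm ?_ ((Metric.le_infDist ⟨_, hmem⟩).2 ?_)
  · simpa only [dist_eq_norm] using Metric.infDist_le_dist_of_mem hmem
  · rintro _ ⟨m, rfl⟩
    simpa [dist_eq_norm] using norm_sub_round_re_le z (-m)

end Distance

theorem norm_Gamma_eq_pi_mul_inv_norm_sin_mul_inv_norm_Gamma {z : ℂ} (hz : z.re < 1) :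
    ‖Complex.Gamma z‖ =
      Real.pi * ‖Complex.sin (Real.pi * z)‖⁻¹ * ‖Complex.Gamma (1 - z)‖⁻¹ := by
  have hne : ‖Complex.Gamma (1 - z)‖ ≠ 0 :=
    norm_ne_zero_iff.2 (Complex.Gamma_ne_zero_of_re_pos (by simpa using hz))
  have h := congrArg norm (Complex.Gamma_mul_Gamma_one_sub z)
  rw [norm_mul, norm_div, Complex.norm_real, Real.norm_of_nonneg Real.pi_nonneg] at h
  rw [← div_eq_mul_inv Real.pi, ← h, mul_inv_cancel_right₀ hne]

theorem inv_norm_Gamma_one_sub_le {z : ℂ} (hz : z.re ≤ 0) (h0 : z ≠ 0) :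
    ‖Complex.Gamma (1 - z)‖⁻¹ ≤
      ‖z‖ ^ (z.re - 1 / 2) * Real.exp (-z.re) * Real.exp (-(z.im * Complex.arg (-z))) *
        Real.exp (3 / 2) := by
  have hpos : 0 < ‖z‖ := norm_pos_iff.2 h0
  have h := norm_rpow_mul_exp_le_norm_Gamma_one_add (w := -z) (by simpa using hz)
    (neg_ne_zero.2 h0)
  rw [← sub_eq_add_neg, norm_neg, Complex.neg_re, Complex.neg_im] at h
  refine (inv_anti₀ (by positivity) h).trans_eq ?_
  rw [mul_inv, mul_inv, mul_inv, ← Real.rpow_neg hpos.le, ← Real.exp_neg, ← Real.exp_neg,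
    ← Real.exp_neg]
  ring_nf

theorem stmt_18 :
    ∃ C : ℝ, 0 < C ∧ ∀ z : ℂ, z.re ≤ 0 → z ∉ negNat0 →
      ‖Complex.Gamma z‖ ≤
        C * ‖z‖ ^ (z.re - 1/2) * Real.exp (-z.re) *
          Real.exp (-(Real.pi * |z.im|) - z.im * Complex.arg (-z)) *
          (1 + (Metric.infDist z negNat0)⁻¹) := by
  refine ⟨4 * Real.pi * Real.exp (3 / 2), by positivity, fun z hz hmem => ?_⟩
  have h0 : z ≠ 0 := fun h => hmem ⟨0, by simp [h]⟩
  have hround : z ≠ round z.re := fun h => hmem (h ▸ round_re_mem_negNat0 hz)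
  rw [norm_Gamma_eq_pi_mul_inv_norm_sin_mul_inv_norm_Gamma (hz.trans_lt one_pos),
    infDist_negNat0 hz]
  calc _ ≤ Real.pi * (4 * Real.exp (-(Real.pi * |z.im|)) * (1 + ‖z - round z.re‖⁻¹)) *
        (‖z‖ ^ (z.re - 1 / 2) * Real.exp (-z.re) * Real.exp (-(z.im * Complex.arg (-z))) *
          Real.exp (3 / 2)) := by
        gcongr
        · exact inv_norm_sin_pi_mul_le hround
        · exact inv_norm_Gamma_one_sub_le hz h0
    _ = _ := by
        rw [sub_eq_add_neg (-(Real.pi * |z.im|)), Real.exp_add]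
        ring
end
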